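/- arXiv:1805.09689 — 2 statements merged into one kernel-verified Lean document; each statement's English description precedes it below -/
import Mathlib

section
/- For every n ≥ 1, the thickness of the complete tripartite graph K_{1,n,n} equals ⌈(n+2)/4⌉. -/
open SimpleGraph

/-- A simple graph is planar if it admits a drawing in the plane: an injective
placement of vertices and, for each edge, an injective continuous arc joining
the images of its endpoints, such that arcs avoid vertex images in their
interiors and distinct arcs meet only at vertex images. -/
def IsPlanar {V : Type*} (G : SimpleGraph V) : Prop :=
  ∃ (f : V → ℝ × ℝ) (γ : G.edgeSet → (Set.Icc (0:ℝ) 1 → ℝ × ℝ)),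
    Function.Injective f ∧
    (∀ e : G.edgeSet, Continuous (γ e)) ∧
    (∀ e : G.edgeSet, ∃ u v : V, (e : Sym2 V) = s(u, v) ∧
      γ e ⟨0, by norm_num⟩ = f u ∧ γ e ⟨1, by norm_num⟩ = f v) ∧
    (∀ e : G.edgeSet, Function.Injective (γ e)) ∧
    (∀ e : G.edgeSet, ∀ t : Set.Icc (0:ℝ) 1, (t : ℝ) ≠ 0 → (t : ℝ) ≠ 1 →
      ∀ v : V, γ e t ≠ f v) ∧
    (∀ e e' : G.edgeSet, e ≠ e' → ∀ s t : Set.Icc (0:ℝ) 1,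
      γ e s = γ e' t → γ e s ∈ Set.range f)

/-- The thickness of a graph: the least `n` such that `G` is the union of `n`
planar subgraphs. -/
noncomputable def thickness {V : Type*} (G : SimpleGraph V) : ℕ :=
  sInf {n : ℕ | ∃ H : Fin n → SimpleGraph V,
    (∀ i, H i ≤ G) ∧ (∀ i, IsPlanar (H i)) ∧ (⨆ i, H i) = G}

/-! ### Book embeddings give planar drawings -/

lemma parab_aux (a b c d X : ℝ) 
    (h1 : a ≤ X) (h2 : X ≤ b) (h3 : c ≤ X) (h4 : X ≤ d)
    (hne : ¬ (a = c ∧ b = d)) (hx1 : ¬ (a < c ∧ c < b ∧ b < d)) (hx2 : ¬ (c < a ∧ a < d ∧ d < b))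
    (heq : (X - a) * (b - X) = (X - c) * (d - X)) : X = a ∨ X = b := by
  have nest1 : a ≤ c → d ≤ b → X = a ∨ X = b := by
    intro hac hdb
    have e : (c - a) * (b - X) + (X - c) * (b - d) = 0 := by linarith [heq]
    have p1 : 0 ≤ (c - a) * (b - X) := mul_nonneg (by linarith) (by linarith)
    have p2 : 0 ≤ (X - c) * (b - d) := mul_nonneg (by linarith) (by linarith)
    have z1 : (c - a) * (b - X) = 0 := by linarith
    have z2 : (X - c) * (b - d) = 0 := by linarith
    rcases mul_eq_zero.1 z1 with h | h
    · rcases mul_eq_zero.1 z2 with h' | h'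
      · left; linarith
      · exact absurd ⟨by linarith, by linarith⟩ hne
    · right; linarith
  have nest2 : c ≤ a → b ≤ d → X = a ∨ X = b := by
    intro hac hdb
    have e : (a - c) * (d - X) + (X - a) * (d - b) = 0 := by linarith [heq]
    have p1 : 0 ≤ (a - c) * (d - X) := mul_nonneg (by linarith) (by linarith)
    have p2 : 0 ≤ (X - a) * (d - b) := mul_nonneg (by linarith) (by linarith)
    have z1 : (a - c) * (d - X) = 0 := by linarith
    have z2 : (X - a) * (d - b) = 0 := by linarith
    rcases mul_eq_zero.1 z1 with h | h
    · rcases mul_eq_zero.1 z2 with h' | h'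
      · left; linarith
      · exact absurd ⟨by linarith, by linarith⟩ hne
    · right; linarith
  rcases le_total a c with hac | hac <;> rcases le_total d b with hdb | hdb
  · exact nest1 hac hdb
  · rcases eq_or_lt_of_le hac with h | h
    · exact nest2 h.ge hdb
    rcases eq_or_lt_of_le hdb with h' | h'
    · exact nest1 hac h'.ge
    have : ¬ c < b := fun h'' => hx1 ⟨h, h'', h'⟩
    right; linarith
  · rcases eq_or_lt_of_le hac with h | h
    · exact nest1 h.ge hdb
    rcases eq_or_lt_of_le hdb with h' | h'
    · exact nest2 hac h'.ge
    have : ¬ a < d := fun h'' => hx2 ⟨h, h'', h'⟩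
    left; linarith
  · exact nest2 hac hdb

/-- parabola arc -/
noncomputable def parab (a b σ : ℝ) (t : ℝ) : ℝ × ℝ :=
  (a + (b - a) * t, σ * (((a + (b - a) * t) - a) * (b - (a + (b - a) * t))))

lemma planar_of_book {V : Type*} (G : SimpleGraph V) (pos : V → ℕ)
    (hpos : Function.Injective pos) (T B : ℕ → ℕ → Prop)
    (hT : ∀ a b c d, a < c → c < b → b < d → T a b → T c d → False)
    (hB : ∀ a b c d, a < c → c < b → b < d → B a b → B c d → False)
    (hE : ∀ u v, G.Adj u v → pos u < pos v → T (pos u) (pos v) ∨ B (pos u) (pos v)) :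
    IsPlanar G := by
  classical
  have hex : ∀ e : G.edgeSet, ∃ uv : V × V, (e : Sym2 V) = s(uv.1, uv.2) ∧ pos uv.1 < pos uv.2
      ∧ G.Adj uv.1 uv.2 := by
    rintro ⟨e, he⟩
    induction e using Sym2.ind with
    | _ u v =>
      have hadj : G.Adj u v := he
      rcases lt_trichotomy (pos u) (pos v) with h | h | h
      · exact ⟨(u, v), rfl, h, hadj⟩
      · exact absurd (hpos h) hadj.ne
      · exact ⟨(v, u), Sym2.eq_swap, h, hadj.symm⟩
  choose uv huv hlt hadj using hex
  let A : G.edgeSet → ℝ := fun e => (pos (uv e).1 : ℝ)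
  let C : G.edgeSet → ℝ := fun e => (pos (uv e).2 : ℝ)
  let S : G.edgeSet → ℝ := fun e => if T (pos (uv e).1) (pos (uv e).2) then 1 else -1
  have hAC : ∀ e, A e < C e := fun e => by
    have := hlt e
    show ((pos (uv e).1 : ℕ) : ℝ) < pos (uv e).2
    exact_mod_cast this
  have hS : ∀ e, S e = 1 ∨ S e = -1 := fun e => by
    by_cases h : T (pos (uv e).1) (pos (uv e).2) <;> simp [S, h]
  have hS0 : ∀ e, S e ≠ 0 := fun e => by rcases hS e with h | h <;> rw [h] <;> norm_num
  refine ⟨fun v => ((pos v : ℝ), 0), fun e t => parab (A e) (C e) (S e) t, ?_, ?_, ?_, ?_, ?_, ?_⟩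
  · intro u v h
    apply hpos
    have := congrArg Prod.fst h
    simpa using this
  · intro e
    unfold parab
    fun_prop
  · intro e
    refine ⟨(uv e).1, (uv e).2, huv e, ?_, ?_⟩
    · simp [parab, A]
    · simp [parab, C]
  · intro e s t h
    have h1 := congrArg Prod.fst h
    simp only [parab] at h1
    have := hAC e
    have h2 : (C e - A e) * (s : ℝ) = (C e - A e) * t := by linarith
    exact Subtype.ext (mul_left_cancel₀ (by linarith) h2)
  · intro e t h0 h1 v h
    have h2 := congrArg Prod.snd h
    simp only [parab] at h2
    have h3 : S e * ((C e - A e) * t * ((C e - A e) * (1 - t))) = 0 := by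
      refine Eq.trans ?_ h2; ring
    have := hAC e
    have h4 : (C e - A e) ≠ 0 := by linarith
    have h5 : (1 - (t : ℝ)) ≠ 0 := fun h => h1 (by linarith)
    exact absurd h3 (mul_ne_zero (hS0 e) (mul_ne_zero (mul_ne_zero h4 h0) (mul_ne_zero h4 h5)))
  · intro e e' hne s t h
    obtain ⟨s, hs0, hs1⟩ := s
    obtain ⟨t, ht0, ht1⟩ := t
    simp only [] at h ⊢
    have h1 := congrArg Prod.fst h
    have h2 := congrArg Prod.snd h
    simp only [parab] at h1 h2
    have key : A e + (C e - A e) * s = A e ∨ A e + (C e - A e) * s = C e := by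
      have hl := hAC e
      have hl' := hAC e'
      set X := A e + (C e - A e) * s with hX
      rw [← h1] at h2
      have b1 : A e ≤ X := by rw [hX]; nlinarith
      have b2 : X ≤ C e := by rw [hX]; nlinarith
      have b3 : A e' ≤ X := by rw [h1]; nlinarith
      have b4 : X ≤ C e' := by rw [h1]; nlinarith
      have n1 : 0 ≤ (X - A e) * (C e - X) := mul_nonneg (by linarith) (by linarith)
      have n2 : 0 ≤ (X - A e') * (C e' - X) := mul_nonneg (by linarith) (by linarith)
      by_cases hs : S e = S e'
      · rw [hs] at h2
        have h3 := mul_left_cancel₀ (hS0 e') h2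
        refine parab_aux _ _ _ _ X b1 b2 b3 b4 ?_ ?_ ?_ h3
        · rintro ⟨q1, q2⟩
          apply hne
          apply Subtype.ext
          rw [huv e, huv e']
          have r1 : (uv e).1 = (uv e').1 := hpos (by simp only [A] at q1; exact_mod_cast q1)
          have r2 : (uv e).2 = (uv e').2 := hpos (by simp only [C] at q2; exact_mod_cast q2)
          rw [r1, r2]
        · rintro ⟨q1, q2, q3⟩
          simp only [A, C, Nat.cast_lt] at q1 q2 q3
          simp only [S] at hs
          have g := hE _ _ (hadj e) (hlt e)
          have g' := hE _ _ (hadj e') (hlt e')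
          by_cases t1 : T (pos (uv e).1) (pos (uv e).2) <;>
            by_cases t2 : T (pos (uv e').1) (pos (uv e').2)
          · exact hT _ _ _ _ q1 q2 q3 t1 t2
          · norm_num [t1, t2] at hs
          · norm_num [t1, t2] at hs
          · exact hB _ _ _ _ q1 q2 q3 (g.resolve_left t1) (g'.resolve_left t2)
        · rintro ⟨q1, q2, q3⟩
          simp only [A, C, Nat.cast_lt] at q1 q2 q3
          simp only [S] at hs
          have g := hE _ _ (hadj e) (hlt e)
          have g' := hE _ _ (hadj e') (hlt e')
          by_cases t1 : T (pos (uv e).1) (pos (uv e).2) <;>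
            by_cases t2 : T (pos (uv e').1) (pos (uv e').2)
          · exact hT _ _ _ _ q1 q2 q3 t2 t1
          · norm_num [t1, t2] at hs
          · norm_num [t1, t2] at hs
          · exact hB _ _ _ _ q1 q2 q3 (g'.resolve_left t2) (g.resolve_left t1)
      · have h3 : (X - A e) * (C e - X) = 0 := by
          rcases hS e with a1 | a1 <;> rcases hS e' with a2 | a2 <;>
            rw [a1, a2] at h2 hs <;> first | exact absurd rfl hs | linarith
        rcases mul_eq_zero.1 h3 with h | h
        · left; linarith
        · right; linarith
    rcases key with hk | hk
    · refine ⟨(uv e).1, ?_⟩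
      simp only [parab, hk]
      simp [A]
    · refine ⟨(uv e).2, ?_⟩
      simp only [parab, hk]
      simp [C]

/-! ### The decomposition -/

/-- vertices of the tripartite graph -/
abbrev TV (n : ℕ) : Type := Σ i : Fin 3, (![Fin 1, Fin n, Fin n] : Fin 3 → Type) i

/-- index of a vertex inside its part -/
def vidx {n : ℕ} : TV n → ℕ
  | ⟨0, _⟩ => 0
  | ⟨1, a⟩ => Fin.val (n := n) a
  | ⟨2, a⟩ => Fin.val (n := n) a

lemma vidx_inj {n : ℕ} {p q : TV n} (h1 : p.1 = q.1) (h2 : vidx p = vidx q) : p = q := by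
  obtain ⟨i, a⟩ := p
  obtain ⟨j, b⟩ := q
  simp only at h1
  subst h1
  congr 1
  fin_cases i
  · exact Subsingleton.elim (α := Fin 1) a b
  · exact Fin.ext (n := n) h2
  · exact Fin.ext (n := n) h2

lemma vidx_lt {n : ℕ} (p : TV n) (hp : p.1 ≠ 0) : vidx p < n := by
  obtain ⟨i, a⟩ := p
  fin_cases i
  · exact absurd rfl hp
  · exact Fin.isLt (n := n) a
  · exact Fin.isLt (n := n) a

/-- positions in layer `r` of the `u` vertices -/
def uA (L r j : ℕ) : ℕ :=
  if j / 4 = r then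
    (if j % 4 = 0 then 0 else if j % 4 = 1 then 6 * L else if j % 4 = 2 then 3 * L else 9 * L)
  else if j % 2 = 0 then 10 * L + j else 4 * L + j

/-- positions in layer `r` of the `v` vertices -/
def vA (L r j : ℕ) : ℕ :=
  if j / 4 = r then
    (if j % 4 = 0 then 7 * L else if j % 4 = 1 then L else if j % 4 = 2 then 11 * L else 5 * L)
  else if j % 2 = 0 then (if j = 4 * (r + 1) then 9 * L - 1 else 8 * L + j)
  else (if j = 4 * (r + 1) + 1 then 3 * L - 1 else 2 * L + j)

/-- position in layer `r` -/
def posA {n : ℕ} (L r : ℕ) (p : TV n) : ℕ :=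
  if p.1 = 0 then 12 * L else if p.1 = 1 then uA L r (vidx p) else vA L r (vidx p)

/-- top page in an ordinary layer -/
def TA (L a b : ℕ) : Prop :=
  (a = 0 ∧ b = L) ∨ (a = 0 ∧ 2 * L ≤ b ∧ b < 3 * L) ∨ (a = 3 * L ∧ b = 5 * L) ∨
  (4 * L ≤ a ∧ a < 5 * L ∧ b = 5 * L) ∨ (a = 5 * L ∧ b = 6 * L) ∨ (a = 6 * L ∧ b = 7 * L) ∨
  (a = 6 * L ∧ 8 * L ≤ b ∧ b < 9 * L) ∨ (a = 9 * L ∧ b = 11 * L) ∨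
  (10 * L ≤ a ∧ a < 11 * L ∧ b = 11 * L) ∨
  (b = 12 * L ∧ (a = 0 ∨ a + 1 = 3 * L ∨ a = 3 * L ∨ a = 5 * L ∨ a = 6 * L ∨ a + 1 = 9 * L ∨
    a = 9 * L ∨ a = 11 * L))

/-- bottom page in an ordinary layer -/
def BA (L a b : ℕ) : Prop :=
  (a = L ∧ b = 3 * L) ∨ (2 * L ≤ a ∧ a < 3 * L ∧ b = 3 * L) ∨
  (a = L ∧ 4 * L ≤ b ∧ b < 5 * L) ∨ (a = 0 ∧ b = 5 * L) ∨ (a = 7 * L ∧ b = 9 * L) ∨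
  (8 * L ≤ a ∧ a < 9 * L ∧ b = 9 * L) ∨ (a = 7 * L ∧ 10 * L ≤ b ∧ b < 11 * L) ∨
  (a = 6 * L ∧ b = 11 * L) ∨ (a = 0 ∧ b = 11 * L)

lemma TA_nc (L a b c d : ℕ) (h1 : a < c) (h2 : c < b) (h3 : b < d) (h : TA L a b)
    (h' : TA L c d) : False := by
  unfold TA at h h'
  rcases h with h | h | h | h | h | h | h | h | h | h <;> omega

lemma BA_nc (L a b c d : ℕ) (h1 : a < c) (h2 : c < b) (h3 : b < d) (h : BA L a b)
    (h' : BA L c d) : False := by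
  unfold BA at h h'
  rcases h with h | h | h | h | h | h | h | h | h <;> omega

/-- last layer -/
def uB (k L j : ℕ) : ℕ :=
  if j = 4 * k then 5 * L else if j = 4 * k + 1 then 2 * L
  else if j % 4 = 0 then L + j else if j % 4 = 2 then L + j
  else if j % 4 = 1 then 4 * L + (j - 1) else 4 * L + (j - 1)

/-- last layer -/
def vB (k L j : ℕ) : ℕ :=
  if j = 4 * k then 0 else if j = 4 * k + 1 then 3 * L
  else if j % 4 = 0 then L + j + 1 else if j % 4 = 2 then L + j + 1
  else if j % 4 = 1 then 4 * L + j else 4 * L + j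

/-- last layer -/
def posB {n : ℕ} (k L : ℕ) (p : TV n) : ℕ :=
  if p.1 = 0 then 6 * L else if p.1 = 1 then uB k L (vidx p) else vB k L (vidx p)

/-- last layer, top -/
def TB (L a b : ℕ) : Prop :=
  b = a + 1 ∨ (a = 0 ∧ L ≤ b ∧ b < 2 * L) ∨ (a = 0 ∧ b = 2 * L) ∨ (a = 2 * L ∧ b = 3 * L) ∨
  (a = 3 * L ∧ 4 * L ≤ b ∧ b < 5 * L) ∨ (a = 3 * L ∧ b = 5 * L) ∨ (a = 0 ∧ b = 5 * L)

/-- last layer, bottom -/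
def BB (L a b : ℕ) : Prop :=
  (L + 1 ≤ a ∧ a < 2 * L ∧ b = 2 * L) ∨ (4 * L + 1 ≤ a ∧ a < 5 * L ∧ b = 5 * L) ∨
  (b = 6 * L ∧ (a = 0 ∨ a = L + 1 ∨ a = 2 * L ∨ a = 3 * L ∨ a = 4 * L + 1 ∨ a = 5 * L))

lemma TB_nc (L a b c d : ℕ) (h1 : a < c) (h2 : c < b) (h3 : b < d) (h : TB L a b)
    (h' : TB L c d) : False := by
  unfold TB at h h'
  rcases h with h | h | h | h | h | h | h <;> omega

lemma BB_nc (L a b c d : ℕ) (h1 : a < c) (h2 : c < b) (h3 : b < d) (h : BB L a b)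
    (h' : BB L c d) : False := by
  unfold BB at h h'
  rcases h with h | h | h <;> omega

lemma three_cases (i : Fin 3) : i = 0 ∨ i = 1 ∨ i = 2 := by
  fin_cases i <;> simp

lemma uA_inj (L r i j : ℕ) (hi : i + 20 ≤ L) (hj : j + 20 ≤ L) (h : uA L r i = uA L r j) :
    i = j := by
  unfold uA at h
  split_ifs at h <;> omega

lemma vA_inj (L r i j : ℕ) (hi : i + 20 ≤ L) (hj : j + 20 ≤ L) (h : vA L r i = vA L r j) :
    i = j := by
  unfold vA at h
  split_ifs at h <;> omega

lemma uvA_ne (L r i j : ℕ) (hi : i + 20 ≤ L) (hj : j + 20 ≤ L) : uA L r i ≠ vA L r j := by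
  unfold uA vA
  split_ifs <;> omega

lemma uA_lt (L r i : ℕ) (hi : i + 20 ≤ L) : uA L r i < 12 * L := by
  unfold uA
  split_ifs <;> omega

lemma vA_lt (L r i : ℕ) (hi : i + 20 ≤ L) : vA L r i < 12 * L := by
  unfold vA
  split_ifs <;> omega

lemma uB_inj (k L i j : ℕ) (hi : i + 20 ≤ L) (hj : j + 20 ≤ L) (h : uB k L i = uB k L j) :
    i = j := by
  unfold uB at h
  split_ifs at h <;> omega

lemma vB_inj (k L i j : ℕ) (hi : i + 20 ≤ L) (hj : j + 20 ≤ L) (h : vB k L i = vB k L j) :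
    i = j := by
  unfold vB at h
  split_ifs at h <;> omega

lemma uvB_ne (k L i j : ℕ) (hi : i + 20 ≤ L) (hj : j + 20 ≤ L) : uB k L i ≠ vB k L j := by
  unfold uB vB
  split_ifs <;> omega

lemma uB_lt (k L i : ℕ) (hi : i + 20 ≤ L) : uB k L i < 6 * L := by
  unfold uB
  split_ifs <;> omega

lemma vB_lt (k L i : ℕ) (hi : i + 20 ≤ L) : vB k L i < 6 * L := by
  unfold vB
  split_ifs <;> omega

lemma inj_of_parts {n : ℕ} (L M : ℕ) (hL : n + 20 ≤ L) (U W : ℕ → ℕ) (P : TV n → ℕ)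
    (hP : ∀ p, P p = if p.1 = 0 then M else if p.1 = 1 then U (vidx p) else W (vidx p))
    (hU : ∀ i j, i + 20 ≤ L → j + 20 ≤ L → U i = U j → i = j)
    (hW : ∀ i j, i + 20 ≤ L → j + 20 ≤ L → W i = W j → i = j)
    (hUW : ∀ i j, i + 20 ≤ L → j + 20 ≤ L → U i ≠ W j)
    (hUM : ∀ i, i + 20 ≤ L → U i < M) (hWM : ∀ i, i + 20 ≤ L → W i < M) :
    Function.Injective P := by
  intro p q h
  rw [hP, hP] at h
  have hp := vidx_lt p
  have hq := vidx_lt q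
  rcases three_cases p.1 with a | a | a <;> rcases three_cases q.1 with b | b | b <;>
    rw [a] at hp <;> rw [b] at hq <;> simp [a, b] at h hp hq
  · refine vidx_inj (a.trans b.symm) ?_
    obtain ⟨i, p⟩ := p; obtain ⟨j, q⟩ := q
    simp only at a b; subst a; subst b; rfl
  · exact absurd h (hUM _ (by omega)).ne'
  · exact absurd h (hWM _ (by omega)).ne'
  · exact absurd h (hUM _ (by omega)).ne
  · exact vidx_inj (a.trans b.symm) (hU _ _ (by omega) (by omega) h)
  · exact absurd h (hUW _ _ (by omega) (by omega))
  · exact absurd h (hWM _ (by omega)).ne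
  · exact absurd h.symm (hUW _ _ (by omega) (by omega))
  · exact vidx_inj (a.trans b.symm) (hW _ _ (by omega) (by omega) h)

/-- adjacency through either page -/
def PG (T B : ℕ → ℕ → Prop) (a b : ℕ) : Prop :=
  (a < b ∧ (T a b ∨ B a b)) ∨ (b < a ∧ (T b a ∨ B b a))

lemma PG_symm {T B : ℕ → ℕ → Prop} {a b : ℕ} (h : PG T B a b) : PG T B b a := Or.symm h

/-- subgraph of `G` kept by the pages -/
def layerGraph {V : Type*} (G : SimpleGraph V) (pos : V → ℕ) (T B : ℕ → ℕ → Prop) :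
    SimpleGraph V where
  Adj p q := G.Adj p q ∧ PG T B (pos p) (pos q)
  symm := ⟨fun _ _ h => ⟨h.1.symm, PG_symm h.2⟩⟩
  loopless := ⟨fun _ h => h.1.ne rfl⟩

lemma layer_planar {V : Type*} (G : SimpleGraph V) (pos : V → ℕ)
    (hpos : Function.Injective pos) (T B : ℕ → ℕ → Prop)
    (hT : ∀ a b c d, a < c → c < b → b < d → T a b → T c d → False)
    (hB : ∀ a b c d, a < c → c < b → b < d → B a b → B c d → False) :
    IsPlanar (layerGraph G pos T B) := by
  refine planar_of_book _ pos hpos T B hT hB ?_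
  intro u v h hlt
  rcases h.2 with h | h
  · exact h.2
  · exact absurd h.1 hlt.le.not_gt

lemma core_cov (L r s t : ℕ) (hs : s < 4) (ht : t < 4) (hL : 20 + (4 * r + 3) ≤ L)
    (h : ¬ (s = t ∨ (s = 2 ∧ t = 0) ∨ (s = 3 ∧ t = 1))) :
    PG (TA L) (BA L) (uA L r (4 * r + s)) (vA L r (4 * r + t)) := by
  have e1 : (4 * r + s) / 4 = r := by omega
  have e2 : (4 * r + t) / 4 = r := by omega
  have e3 : (4 * r + s) % 4 = s := by omega
  have e4 : (4 * r + t) % 4 = t := by omega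
  unfold uA vA
  rw [e1, e2, e3, e4]
  interval_cases s <;> interval_cases t <;> first | (exfalso; omega) | skip
  all_goals
    norm_num
    first
    | exact Or.inl ⟨by omega, Or.inl (by unfold TA; first | (left; omega) | (right; left; omega) | (right; right; left; omega) | (right; right; right; left; omega) | (right; right; right; right; left; omega) | (right; right; right; right; right; left; omega) | (right; right; right; right; right; right; left; omega) | (right; right; right; right; right; right; right; left; omega) | (right; right; right; right; right; right; right; right; left; omega) | (right; right; right; right; right; right; right; right; right; omega))⟩
    | exact Or.inl ⟨by omega, Or.inr (by unfold BA; first | (left; omega) | (right; left; omega) | (right; right; left; omega) | (right; right; right; left; omega) | (right; right; right; right; left; omega) | (right; right; right; right; right; left; omega) | (right; right; right; right; right; right; left; omega) | (right; right; right; right; right; right; right; left; omega) | (right; right; right; right; right; right; right; right; omega))⟩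
    | exact Or.inr ⟨by omega, Or.inl (by unfold TA; first | (left; omega) | (right; left; omega) | (right; right; left; omega) | (right; right; right; left; omega) | (right; right; right; right; left; omega) | (right; right; right; right; right; left; omega) | (right; right; right; right; right; right; left; omega) | (right; right; right; right; right; right; right; left; omega) | (right; right; right; right; right; right; right; right; left; omega) | (right; right; right; right; right; right; right; right; right; omega))⟩
    | exact Or.inr ⟨by omega, Or.inr (by unfold BA; first | (left; omega) | (right; left; omega) | (right; right; left; omega) | (right; right; right; left; omega) | (right; right; right; right; left; omega) | (right; right; right; right; right; left; omega) | (right; right; right; right; right; right; left; omega) | (right; right; right; right; right; right; right; left; omega) | (right; right; right; right; right; right; right; right; omega))⟩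

lemma ext_cov1 (L r i t : ℕ) (ht : t < 4) (hL : 20 + (4 * r + 3) ≤ L) (hi : i + 20 ≤ L)
    (hir : i / 4 ≠ r) (h : i % 2 = t % 2) :
    PG (TA L) (BA L) (uA L r i) (vA L r (4 * r + t)) := by
  have e2 : (4 * r + t) / 4 = r := by omega
  have e4 : (4 * r + t) % 4 = t := by omega
  unfold uA vA
  rw [e2, e4, if_neg hir, h]
  interval_cases t
  all_goals
    norm_num
    first
    | exact Or.inl ⟨by omega, Or.inl (by unfold TA; first | (left; omega) | (right; left; omega) | (right; right; left; omega) | (right; right; right; left; omega) | (right; right; right; right; left; omega) | (right; right; right; right; right; left; omega) | (right; right; right; right; right; right; left; omega) | (right; right; right; right; right; right; right; left; omega) | (right; right; right; right; right; right; right; right; left; omega) | (right; right; right; right; right; right; right; right; right; omega))⟩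
    | exact Or.inl ⟨by omega, Or.inr (by unfold BA; first | (left; omega) | (right; left; omega) | (right; right; left; omega) | (right; right; right; left; omega) | (right; right; right; right; left; omega) | (right; right; right; right; right; left; omega) | (right; right; right; right; right; right; left; omega) | (right; right; right; right; right; right; right; left; omega) | (right; right; right; right; right; right; right; right; omega))⟩
    | exact Or.inr ⟨by omega, Or.inl (by unfold TA; first | (left; omega) | (right; left; omega) | (right; right; left; omega) | (right; right; right; left; omega) | (right; right; right; right; left; omega) | (right; right; right; right; right; left; omega) | (right; right; right; right; right; right; left; omega) | (right; right; right; right; right; right; right; left; omega) | (right; right; right; right; right; right; right; right; left; omega) | (right; right; right; right; right; right; right; right; right; omega))⟩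
    | exact Or.inr ⟨by omega, Or.inr (by unfold BA; first | (left; omega) | (right; left; omega) | (right; right; left; omega) | (right; right; right; left; omega) | (right; right; right; right; left; omega) | (right; right; right; right; right; left; omega) | (right; right; right; right; right; right; left; omega) | (right; right; right; right; right; right; right; left; omega) | (right; right; right; right; right; right; right; right; omega))⟩

lemma ext_cov2 (L r j s : ℕ) (hs : s < 4) (hL : 20 + (4 * r + 3) ≤ L) (hj : j + 20 ≤ L)
    (hjr : j / 4 ≠ r) (h : j % 2 ≠ s % 2) :
    PG (TA L) (BA L) (uA L r (4 * r + s)) (vA L r j) := by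
  have e2 : (4 * r + s) / 4 = r := by omega
  have e4 : (4 * r + s) % 4 = s := by omega
  have h' : j % 2 = (s + 1) % 2 := by omega
  unfold uA vA
  rw [e2, e4, if_neg hjr, h']
  interval_cases s
  all_goals
    norm_num
    try split_ifs
  all_goals
    first
    | exact Or.inl ⟨by omega, Or.inl (by unfold TA; first | (left; omega) | (right; left; omega) | (right; right; left; omega) | (right; right; right; left; omega) | (right; right; right; right; left; omega) | (right; right; right; right; right; left; omega) | (right; right; right; right; right; right; left; omega) | (right; right; right; right; right; right; right; left; omega) | (right; right; right; right; right; right; right; right; left; omega) | (right; right; right; right; right; right; right; right; right; omega))⟩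
    | exact Or.inl ⟨by omega, Or.inr (by unfold BA; first | (left; omega) | (right; left; omega) | (right; right; left; omega) | (right; right; right; left; omega) | (right; right; right; right; left; omega) | (right; right; right; right; right; left; omega) | (right; right; right; right; right; right; left; omega) | (right; right; right; right; right; right; right; left; omega) | (right; right; right; right; right; right; right; right; omega))⟩
    | exact Or.inr ⟨by omega, Or.inl (by unfold TA; first | (left; omega) | (right; left; omega) | (right; right; left; omega) | (right; right; right; left; omega) | (right; right; right; right; left; omega) | (right; right; right; right; right; left; omega) | (right; right; right; right; right; right; left; omega) | (right; right; right; right; right; right; right; left; omega) | (right; right; right; right; right; right; right; right; left; omega) | (right; right; right; right; right; right; right; right; right; omega))⟩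
    | exact Or.inr ⟨by omega, Or.inr (by unfold BA; first | (left; omega) | (right; left; omega) | (right; right; left; omega) | (right; right; right; left; omega) | (right; right; right; right; left; omega) | (right; right; right; right; right; left; omega) | (right; right; right; right; right; right; left; omega) | (right; right; right; right; right; right; right; left; omega) | (right; right; right; right; right; right; right; right; omega))⟩

lemma x_cov1 (L r s : ℕ) (hs : s < 4) (hL : 20 ≤ L) :
    PG (TA L) (BA L) (12 * L) (uA L r (4 * r + s)) := by
  have e2 : (4 * r + s) / 4 = r := by omega
  have e4 : (4 * r + s) % 4 = s := by omega
  unfold uA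
  rw [e2, e4]
  interval_cases s
  all_goals
    norm_num
    first
    | exact Or.inl ⟨by omega, Or.inl (by unfold TA; first | (left; omega) | (right; left; omega) | (right; right; left; omega) | (right; right; right; left; omega) | (right; right; right; right; left; omega) | (right; right; right; right; right; left; omega) | (right; right; right; right; right; right; left; omega) | (right; right; right; right; right; right; right; left; omega) | (right; right; right; right; right; right; right; right; left; omega) | (right; right; right; right; right; right; right; right; right; omega))⟩
    | exact Or.inl ⟨by omega, Or.inr (by unfold BA; first | (left; omega) | (right; left; omega) | (right; right; left; omega) | (right; right; right; left; omega) | (right; right; right; right; left; omega) | (right; right; right; right; right; left; omega) | (right; right; right; right; right; right; left; omega) | (right; right; right; right; right; right; right; left; omega) | (right; right; right; right; right; right; right; right; omega))⟩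
    | exact Or.inr ⟨by omega, Or.inl (by unfold TA; first | (left; omega) | (right; left; omega) | (right; right; left; omega) | (right; right; right; left; omega) | (right; right; right; right; left; omega) | (right; right; right; right; right; left; omega) | (right; right; right; right; right; right; left; omega) | (right; right; right; right; right; right; right; left; omega) | (right; right; right; right; right; right; right; right; left; omega) | (right; right; right; right; right; right; right; right; right; omega))⟩
    | exact Or.inr ⟨by omega, Or.inr (by unfold BA; first | (left; omega) | (right; left; omega) | (right; right; left; omega) | (right; right; right; left; omega) | (right; right; right; right; left; omega) | (right; right; right; right; right; left; omega) | (right; right; right; right; right; right; left; omega) | (right; right; right; right; right; right; right; left; omega) | (right; right; right; right; right; right; right; right; omega))⟩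

lemma x_cov2 (L r s : ℕ) (hs : s < 4) (hs2 : 2 ≤ s) (hL : 20 ≤ L) :
    PG (TA L) (BA L) (12 * L) (vA L r (4 * r + s)) := by
  have e2 : (4 * r + s) / 4 = r := by omega
  have e4 : (4 * r + s) % 4 = s := by omega
  unfold vA
  rw [e2, e4]
  interval_cases s
  all_goals
    norm_num
    first
    | exact Or.inl ⟨by omega, Or.inl (by unfold TA; first | (left; omega) | (right; left; omega) | (right; right; left; omega) | (right; right; right; left; omega) | (right; right; right; right; left; omega) | (right; right; right; right; right; left; omega) | (right; right; right; right; right; right; left; omega) | (right; right; right; right; right; right; right; left; omega) | (right; right; right; right; right; right; right; right; left; omega) | (right; right; right; right; right; right; right; right; right; omega))⟩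
    | exact Or.inl ⟨by omega, Or.inr (by unfold BA; first | (left; omega) | (right; left; omega) | (right; right; left; omega) | (right; right; right; left; omega) | (right; right; right; right; left; omega) | (right; right; right; right; right; left; omega) | (right; right; right; right; right; right; left; omega) | (right; right; right; right; right; right; right; left; omega) | (right; right; right; right; right; right; right; right; omega))⟩
    | exact Or.inr ⟨by omega, Or.inl (by unfold TA; first | (left; omega) | (right; left; omega) | (right; right; left; omega) | (right; right; right; left; omega) | (right; right; right; right; left; omega) | (right; right; right; right; right; left; omega) | (right; right; right; right; right; right; left; omega) | (right; right; right; right; right; right; right; left; omega) | (right; right; right; right; right; right; right; right; left; omega) | (right; right; right; right; right; right; right; right; right; omega))⟩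
    | exact Or.inr ⟨by omega, Or.inr (by unfold BA; first | (left; omega) | (right; left; omega) | (right; right; left; omega) | (right; right; right; left; omega) | (right; right; right; right; left; omega) | (right; right; right; right; right; left; omega) | (right; right; right; right; right; right; left; omega) | (right; right; right; right; right; right; right; left; omega) | (right; right; right; right; right; right; right; right; omega))⟩

lemma x_cov3 (L r s : ℕ) (hs : s < 2) (hL : 20 ≤ L) :
    PG (TA L) (BA L) (12 * L) (vA L r (4 * (r + 1) + s)) := by
  have e2 : (4 * (r + 1) + s) / 4 ≠ r := by omega
  have e4 : (4 * (r + 1) + s) % 2 = s := by omega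
  unfold vA
  rw [if_neg e2, e4]
  interval_cases s
  all_goals
    norm_num
    first
    | exact Or.inl ⟨by omega, Or.inl (by unfold TA; first | (left; omega) | (right; left; omega) | (right; right; left; omega) | (right; right; right; left; omega) | (right; right; right; right; left; omega) | (right; right; right; right; right; left; omega) | (right; right; right; right; right; right; left; omega) | (right; right; right; right; right; right; right; left; omega) | (right; right; right; right; right; right; right; right; left; omega) | (right; right; right; right; right; right; right; right; right; omega))⟩
    | exact Or.inl ⟨by omega, Or.inr (by unfold BA; first | (left; omega) | (right; left; omega) | (right; right; left; omega) | (right; right; right; left; omega) | (right; right; right; right; left; omega) | (right; right; right; right; right; left; omega) | (right; right; right; right; right; right; left; omega) | (right; right; right; right; right; right; right; left; omega) | (right; right; right; right; right; right; right; right; omega))⟩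
    | exact Or.inr ⟨by omega, Or.inl (by unfold TA; first | (left; omega) | (right; left; omega) | (right; right; left; omega) | (right; right; right; left; omega) | (right; right; right; right; left; omega) | (right; right; right; right; right; left; omega) | (right; right; right; right; right; right; left; omega) | (right; right; right; right; right; right; right; left; omega) | (right; right; right; right; right; right; right; right; left; omega) | (right; right; right; right; right; right; right; right; right; omega))⟩
    | exact Or.inr ⟨by omega, Or.inr (by unfold BA; first | (left; omega) | (right; left; omega) | (right; right; left; omega) | (right; right; right; left; omega) | (right; right; right; right; left; omega) | (right; right; right; right; right; left; omega) | (right; right; right; right; right; right; left; omega) | (right; right; right; right; right; right; right; left; omega) | (right; right; right; right; right; right; right; right; omega))⟩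

lemma last_uv (k L i j : ℕ) (hL : 4 * k + 30 ≤ L) (hi : i < 4 * k + 2) (hj : j < 4 * k + 2)
    (h : (i / 4 = j / 4 ∧ (i = j ∨ (i % 4 = 2 ∧ j % 4 = 0) ∨ (i % 4 = 3 ∧ j % 4 = 1))) ∨
      (i < 4 * k ∧ 4 * k ≤ j ∧ i % 2 = j % 2) ∨ (j < 4 * k ∧ 4 * k ≤ i ∧ i % 2 ≠ j % 2) ∨
      (4 * k ≤ i ∧ 4 * k ≤ j)) :
    PG (TB L) (BB L) (uB k L i) (vB k L j) := by
  unfold uB vB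
  split_ifs <;> first | (exfalso; omega) | skip
  all_goals
    first
    | exact Or.inl ⟨by omega, Or.inl (by unfold TB; first | (left; omega) | (right; left; omega) | (right; right; left; omega) | (right; right; right; left; omega) | (right; right; right; right; left; omega) | (right; right; right; right; right; left; omega) | (right; right; right; right; right; right; omega))⟩
    | exact Or.inl ⟨by omega, Or.inr (by unfold BB; first | (left; omega) | (right; left; omega) | (right; right; omega))⟩
    | exact Or.inr ⟨by omega, Or.inl (by unfold TB; first | (left; omega) | (right; left; omega) | (right; right; left; omega) | (right; right; right; left; omega) | (right; right; right; right; left; omega) | (right; right; right; right; right; left; omega) | (right; right; right; right; right; right; omega))⟩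
    | exact Or.inr ⟨by omega, Or.inr (by unfold BB; first | (left; omega) | (right; left; omega) | (right; right; omega))⟩

lemma last_xu (k L i : ℕ) (hL : 4 * k + 30 ≤ L) (hi : i < 4 * k + 2) (h : 4 * k ≤ i) :
    PG (TB L) (BB L) (6 * L) (uB k L i) := by
  unfold uB
  split_ifs <;> first | (exfalso; omega) | skip
  all_goals
    first
    | exact Or.inl ⟨by omega, Or.inl (by unfold TB; first | (left; omega) | (right; left; omega) | (right; right; left; omega) | (right; right; right; left; omega) | (right; right; right; right; left; omega) | (right; right; right; right; right; left; omega) | (right; right; right; right; right; right; omega))⟩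
    | exact Or.inl ⟨by omega, Or.inr (by unfold BB; first | (left; omega) | (right; left; omega) | (right; right; omega))⟩
    | exact Or.inr ⟨by omega, Or.inl (by unfold TB; first | (left; omega) | (right; left; omega) | (right; right; left; omega) | (right; right; right; left; omega) | (right; right; right; right; left; omega) | (right; right; right; right; right; left; omega) | (right; right; right; right; right; right; omega))⟩
    | exact Or.inr ⟨by omega, Or.inr (by unfold BB; first | (left; omega) | (right; left; omega) | (right; right; omega))⟩

lemma last_xv (k L i : ℕ) (hL : 4 * k + 30 ≤ L) (h : i < 2) :
    PG (TB L) (BB L) (6 * L) (vB k L i) := by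
  unfold vB
  split_ifs <;> first | (exfalso; omega) | skip
  all_goals
    first
    | exact Or.inl ⟨by omega, Or.inl (by unfold TB; first | (left; omega) | (right; left; omega) | (right; right; left; omega) | (right; right; right; left; omega) | (right; right; right; right; left; omega) | (right; right; right; right; right; left; omega) | (right; right; right; right; right; right; omega))⟩
    | exact Or.inl ⟨by omega, Or.inr (by unfold BB; first | (left; omega) | (right; left; omega) | (right; right; omega))⟩
    | exact Or.inr ⟨by omega, Or.inl (by unfold TB; first | (left; omega) | (right; left; omega) | (right; right; left; omega) | (right; right; right; left; omega) | (right; right; right; right; left; omega) | (right; right; right; right; right; left; omega) | (right; right; right; right; right; right; omega))⟩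
    | exact Or.inr ⟨by omega, Or.inr (by unfold BB; first | (left; omega) | (right; left; omega) | (right; right; omega))⟩

lemma exists_decomp (n k : ℕ) (hn : n ≤ 4 * k + 2) :
    ∃ H : Fin (k + 1) → SimpleGraph (TV n),
      (∀ i, H i ≤ completeMultipartiteGraph ![Fin 1, Fin n, Fin n]) ∧ (∀ i, IsPlanar (H i)) ∧
      (⨆ i, H i) = completeMultipartiteGraph ![Fin 1, Fin n, Fin n] := by
  set G : SimpleGraph (TV n) := completeMultipartiteGraph ![Fin 1, Fin n, Fin n] with hG
  have hadj : ∀ p q : TV n, G.Adj p q ↔ p.1 ≠ q.1 := fun p q => Iff.rfl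
  set L := 4 * k + 30 with hL
  let H : Fin (k + 1) → SimpleGraph (TV n) := fun r =>
    if (r : ℕ) < k then layerGraph G (posA L r) (TA L) (BA L)
    else layerGraph G (posB k L) (TB L) (BB L)
  have hle : ∀ i, H i ≤ G := by
    intro i p q h
    simp only [H] at h
    split_ifs at h <;> exact h.1
  have hA : ∀ r < k, ∀ p q, G.Adj p q → PG (TA L) (BA L) (posA L r p) (posA L r q) →
      (⨆ i, H i).Adj p q := by
    intro r hr p q h1 h2
    rw [SimpleGraph.iSup_adj]
    refine ⟨⟨r, by omega⟩, ?_⟩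
    simp only [H, hr, if_true]
    exact ⟨h1, h2⟩
  have hB : ∀ p q, G.Adj p q → PG (TB L) (BB L) (posB k L p) (posB k L q) →
      (⨆ i, H i).Adj p q := by
    intro p q h1 h2
    rw [SimpleGraph.iSup_adj]
    refine ⟨⟨k, by omega⟩, ?_⟩
    simp only [H, lt_irrefl, if_false]
    exact ⟨h1, h2⟩
  have huv : ∀ p q : TV n, p.1 = 1 → q.1 = 2 → (⨆ i, H i).Adj p q := by
    intro p q hp hq
    have hpq : G.Adj p q := (hadj p q).2 (by rw [hp, hq]; decide)
    have b1 := vidx_lt p (by rw [hp]; decide)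
    have b2 := vidx_lt q (by rw [hq]; decide)
    have hA' := fun r hr => hA r hr p q hpq
    have hB' := hB p q hpq
    simp only [posA, posB, hp, hq] at hA' hB'
    norm_num [-SimpleGraph.iSup_adj] at hA' hB'
    generalize vidx p = i at *
    generalize vidx q = j at *
    by_cases c : i / 4 = j / 4
    · by_cases c1 : i = j ∨ (i % 4 = 2 ∧ j % 4 = 0) ∨ (i % 4 = 3 ∧ j % 4 = 1)
      · exact hB' (last_uv k L i j (by omega) (by omega) (by omega) (Or.inl ⟨c, c1⟩))
      · by_cases c2 : i / 4 < k
        · refine hA' (i / 4) c2 ?_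
          have := core_cov L (i / 4) (i % 4) (j % 4) (by omega) (by omega) (by omega) (by omega)
          rwa [show 4 * (i / 4) + i % 4 = i by omega, show 4 * (i / 4) + j % 4 = j by omega] at this
        · exact hB' (last_uv k L i j (by omega) (by omega) (by omega) (by omega))
    · by_cases c1 : i % 2 = j % 2
      · by_cases c2 : j / 4 < k
        · refine hA' (j / 4) c2 ?_
          have := ext_cov1 L (j / 4) i (j % 4) (by omega) (by omega) (by omega) c (by omega)
          rwa [show 4 * (j / 4) + j % 4 = j by omega] at this
        · exact hB' (last_uv k L i j (by omega) (by omega) (by omega) (by omega))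
      · by_cases c2 : i / 4 < k
        · refine hA' (i / 4) c2 ?_
          have := ext_cov2 L (i / 4) j (i % 4) (by omega) (by omega) (by omega)
            (fun h => c h.symm) (by omega)
          rwa [show 4 * (i / 4) + i % 4 = i by omega] at this
        · exact hB' (last_uv k L i j (by omega) (by omega) (by omega) (by omega))
  have hxu : ∀ p q : TV n, p.1 = 0 → q.1 = 1 → (⨆ i, H i).Adj p q := by
    intro p q hp hq
    have hpq : G.Adj p q := (hadj p q).2 (by rw [hp, hq]; decide)
    have b2 := vidx_lt q (by rw [hq]; decide)
    have hA' := fun r hr => hA r hr p q hpq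
    have hB' := hB p q hpq
    simp only [posA, posB, hp, hq] at hA' hB'
    norm_num [-SimpleGraph.iSup_adj] at hA' hB'
    generalize vidx q = j at *
    by_cases c2 : j / 4 < k
    · refine hA' (j / 4) c2 ?_
      have := x_cov1 L (j / 4) (j % 4) (by omega) (by omega)
      rwa [show 4 * (j / 4) + j % 4 = j by omega] at this
    · exact hB' (last_xu k L j (by omega) (by omega) (by omega))
  have hxv : ∀ p q : TV n, p.1 = 0 → q.1 = 2 → (⨆ i, H i).Adj p q := by
    intro p q hp hq
    have hpq : G.Adj p q := (hadj p q).2 (by rw [hp, hq]; decide)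
    have b2 := vidx_lt q (by rw [hq]; decide)
    have hA' := fun r hr => hA r hr p q hpq
    have hB' := hB p q hpq
    simp only [posA, posB, hp, hq] at hA' hB'
    norm_num [-SimpleGraph.iSup_adj] at hA' hB'
    generalize vidx q = j at *
    by_cases c2 : 2 ≤ j % 4
    · refine hA' (j / 4) (by omega) ?_
      have := x_cov2 L (j / 4) (j % 4) (by omega) (by omega) (by omega)
      rwa [show 4 * (j / 4) + j % 4 = j by omega] at this
    · by_cases c3 : j < 2
      · exact hB' (last_xv k L j (by omega) c3)
      · refine hA' (j / 4 - 1) (by omega) ?_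
        have := x_cov3 L (j / 4 - 1) (j % 4) (by omega) (by omega)
        rwa [show 4 * (j / 4 - 1 + 1) + j % 4 = j by omega] at this
  refine ⟨H, hle, ?_, le_antisymm (iSup_le hle) ?_⟩
  · intro i
    simp only [H]
    split_ifs with hi
    · exact layer_planar _ _
        (inj_of_parts L (12 * L) (by omega) (uA L i) (vA L i) _ (fun p => rfl) (uA_inj L i)
          (vA_inj L i) (uvA_ne L i) (uA_lt L i) (vA_lt L i)) _ _ (TA_nc L) (BA_nc L)
    · exact layer_planar _ _
        (inj_of_parts L (6 * L) (by omega) (uB k L) (vB k L) _ (fun p => rfl) (uB_inj k L)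
          (vB_inj k L) (uvB_ne k L) (uB_lt k L) (vB_lt k L)) _ _ (TB_nc L) (BB_nc L)
  · intro p q h
    have h' := (hadj p q).1 h
    rcases three_cases p.1 with a | a | a <;> rcases three_cases q.1 with b | b | b <;>
      first
      | exact absurd (a.trans b.symm) h'
      | exact hxu p q a b
      | exact hxv p q a b
      | exact huv p q a b
      | exact (hxu q p b a).symm
      | exact (hxv q p b a).symm
      | exact (huv q p b a).symm

/-! ### Counting in the cycle space -/

section Count

lemma other_of_sum_zero {ε : Type*} [Fintype ε] (y : ε → ZMod 2) (p : ε → Prop) [DecidablePred p]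
    (h : ∑ e, (if p e then y e else 0) = 0) (e0 : ε) (hp : p e0) (hy : y e0 ≠ 0) :
    ∃ e1, e1 ≠ e0 ∧ p e1 ∧ y e1 ≠ 0 := by
  by_contra hcon
  push Not at hcon
  rw [Finset.sum_eq_single e0] at h
  · rw [if_pos hp] at h
    exact hy h
  · intro b _ hb
    by_cases hpb : p b
    · rw [if_pos hpb]
      exact hcon b hb hpb
    · rw [if_neg hpb]
  · intro h'
    exact absurd (Finset.mem_univ _) h'

/-- end incidence of bipartite edges -/
def bInc {n : ℕ} (e : Fin n × Fin n) : Fin n ⊕ Fin n → Prop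
  | Sum.inl i => e.1 = i
  | Sum.inr j => e.2 = j

instance {n : ℕ} (e : Fin n × Fin n) (w : Fin n ⊕ Fin n) : Decidable (bInc e w) := by
  cases w <;> (unfold bInc; infer_instance)

/-- boundary map of a bipartite graph -/
def bBd {n : ℕ} (E : Finset (Fin n × Fin n)) :
    (E → ZMod 2) →ₗ[ZMod 2] (Fin n ⊕ Fin n → ZMod 2) where
  toFun y w := ∑ e : E, if bInc e.1 w then y e else 0
  map_add' x y := by
    funext w
    simp only [Pi.add_apply, ← Finset.sum_add_distrib]
    refine Finset.sum_congr rfl fun e _ => ?_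
    split_ifs <;> simp
  map_smul' c y := by
    funext w
    simp only [Pi.smul_apply, smul_eq_mul, Finset.mul_sum, RingHom.id_apply]
    refine Finset.sum_congr rfl fun e _ => ?_
    split_ifs <;> simp

lemma four_le_supp {n : ℕ} (E : Finset (Fin n × Fin n)) (y : E → ZMod 2) (hy : bBd E y = 0)
    (hne : y ≠ 0) : 4 ≤ (Finset.univ.filter fun e => y e ≠ 0).card := by
  classical
  have key : ∀ w, ∑ e : E, (if bInc e.1 w then y e else 0) = 0 := fun w => congrFun hy w
  obtain ⟨e0, h0⟩ := Function.ne_iff.1 hne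
  obtain ⟨e1, n1, p1, h1⟩ := other_of_sum_zero y _ (key (Sum.inl e0.1.1)) e0 rfl h0
  obtain ⟨e2, n2, p2, h2⟩ := other_of_sum_zero y _ (key (Sum.inr e0.1.2)) e0 rfl h0
  obtain ⟨e3, n3, p3, h3⟩ := other_of_sum_zero y _ (key (Sum.inr e1.1.2)) e1 rfl h1
  change e1.1.1 = e0.1.1 at p1
  change e2.1.2 = e0.1.2 at p2
  change e3.1.2 = e1.1.2 at p3
  have n1' : e1.1.2 ≠ e0.1.2 := fun h => n1 (Subtype.ext (Prod.ext p1 h))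
  have n2' : e2.1.1 ≠ e0.1.1 := fun h => n2 (Subtype.ext (Prod.ext h p2))
  have n3' : e3.1.1 ≠ e1.1.1 := fun h => n3 (Subtype.ext (Prod.ext h p3))
  have hsub : ({e0, e1, e2, e3} : Finset E) ⊆ Finset.univ.filter fun e => y e ≠ 0 := by
    intro e he
    simp only [Finset.mem_insert, Finset.mem_singleton] at he
    simp only [Finset.mem_filter, Finset.mem_univ, true_and]
    rcases he with rfl | rfl | rfl | rfl <;> assumption
  refine le_trans (le_of_eq ?_) (Finset.card_le_card hsub)
  have a1 : e0 ≠ e1 := n1.symm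
  have a2 : e0 ≠ e2 := n2.symm
  have a3 : e0 ≠ e3 := by rintro rfl; exact n1' p3.symm
  have a4 : e1 ≠ e2 := by rintro rfl; exact n2' p1
  have a5 : e1 ≠ e3 := n3.symm
  have a6 : e2 ≠ e3 := by rintro rfl; exact n1' (p3.symm.trans p2)
  rw [Finset.card_insert_of_notMem (by simp [a1, a2, a3]),
    Finset.card_insert_of_notMem (by simp [a4, a5]),
    Finset.card_insert_of_notMem (by simp [a6]), Finset.card_singleton]

lemma bBd_sum {n : ℕ} (E : Finset (Fin n × Fin n)) (y : E → ZMod 2) :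
    ∑ w, bBd E y w = 0 := by
  change ∑ w, ∑ e : E, (if bInc e.1 w then y e else 0) = 0
  rw [Finset.sum_comm]
  refine Finset.sum_eq_zero fun e _ => ?_
  rw [Fintype.sum_sum_type]
  simp only [bInc, Finset.sum_ite_eq, Finset.mem_univ, if_true]
  exact CharTwo.add_self_eq_zero _

lemma dim_ker {n : ℕ} (hn : 1 ≤ n) (E : Finset (Fin n × Fin n)) :
    E.card + 1 ≤ Module.finrank (ZMod 2) (LinearMap.ker (bBd E)) + 2 * n := by
  have h1 := LinearMap.finrank_range_add_finrank_ker (bBd E)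
  let φ : (Fin n ⊕ Fin n → ZMod 2) →ₗ[ZMod 2] ZMod 2 := ∑ w, LinearMap.proj w
  have hφ : ∀ x, φ x = ∑ w, x w := fun x => by simp [φ]
  have h2 := LinearMap.finrank_range_add_finrank_ker φ
  have h3 : LinearMap.range φ = ⊤ := by
    rw [LinearMap.range_eq_top]
    intro c
    refine ⟨Pi.single (Sum.inl ⟨0, hn⟩) c, ?_⟩
    rw [hφ]
    simp
  have h4 : LinearMap.range (bBd E) ≤ LinearMap.ker φ := by
    rintro _ ⟨y, rfl⟩
    rw [LinearMap.mem_ker, hφ, bBd_sum]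
  have h5 := Submodule.finrank_mono h4
  rw [h3, finrank_top, Module.finrank_self] at h2
  simp only [Module.finrank_fintype_fun_eq_card, Fintype.card_sum, Fintype.card_fin,
    Fintype.card_coe] at h1 h2
  omega

lemma count_bound {n : ℕ} (hn : 2 ≤ n) (E : Finset (Fin n × Fin n)) {Q : Type*}
    (Qf : Finset Q) (y : Q → E → ZMod 2) (hZ : ∀ q ∈ Qf, bBd E (y q) = 0)
    (hspan : ∀ x, bBd E x = 0 → ∃ c : Q → ZMod 2, x = ∑ q ∈ Qf, c q • y q)
    (hsum : ∑ q ∈ Qf, y q = 0)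
    (htwo : ∀ e, (Qf.filter fun q => y q e ≠ 0).card ≤ 2) :
    E.card + 4 ≤ 4 * n := by
  classical
  have hd := dim_ker (by omega) E
  set Q' := Qf.filter fun q => y q ≠ 0 with hQ'
  have h4 : 4 * Q'.card ≤ 2 * E.card := by
    have a : Q'.card * 4 ≤ ∑ q ∈ Q', (Finset.univ.filter fun e => y q e ≠ 0).card := by
      rw [← smul_eq_mul]
      refine Finset.card_nsmul_le_sum _ _ _ fun q hq => ?_
      rw [hQ', Finset.mem_filter] at hq
      exact four_le_supp E _ (hZ q hq.1) hq.2
    have b : ∑ q ∈ Q', (Finset.univ.filter fun e => y q e ≠ 0).card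
        = ∑ e : E, (Q'.filter fun q => y q e ≠ 0).card := by
      simp only [Finset.card_filter]
      rw [Finset.sum_comm]
    have c : ∑ e : E, (Q'.filter fun q => y q e ≠ 0).card ≤ ∑ e : E, 2 := by
      refine Finset.sum_le_sum fun e _ => le_trans (Finset.card_le_card ?_) (htwo e)
      exact Finset.filter_subset_filter _ (Finset.filter_subset _ _)
    simp only [Finset.sum_const, Finset.card_univ, Fintype.card_coe, smul_eq_mul] at c
    omega
  have hspan' : ∀ x, bBd E x = 0 → ∃ c : Q → ZMod 2, x = ∑ q ∈ Q', c q • y q := by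
    intro x hx
    obtain ⟨c, hc⟩ := hspan x hx
    refine ⟨c, ?_⟩
    rw [hc, hQ', Finset.sum_filter_of_ne]
    intro q _ h h0
    exact h (by rw [h0, smul_zero])
  have hsum' : ∑ q ∈ Q', y q = 0 := by
    rw [hQ', Finset.sum_filter_of_ne, hsum]
    intro q _ h
    exact h
  rcases Q'.eq_empty_or_nonempty with he | ⟨q0, hq0⟩
  · have hk : LinearMap.ker (bBd E) = ⊥ := by
      rw [LinearMap.ker_eq_bot']
      intro x hx
      obtain ⟨c, hc⟩ := hspan' x hx
      rw [hc, he, Finset.sum_empty]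
    rw [hk, finrank_bot] at hd
    omega
  · have hle : LinearMap.ker (bBd E) ≤
        Submodule.span (ZMod 2) (((Q'.erase q0).image y : Finset (E → ZMod 2)) : Set (E → ZMod 2)) := by
      intro x hx
      obtain ⟨c, hc⟩ := hspan' x hx
      have hmem : ∀ q ∈ Q'.erase q0, y q ∈ Submodule.span (ZMod 2)
          (((Q'.erase q0).image y : Finset (E → ZMod 2)) : Set (E → ZMod 2)) := fun q hq =>
        Submodule.subset_span (Finset.mem_coe.2 (Finset.mem_image_of_mem _ hq))
      have hq0m : y q0 ∈ Submodule.span (ZMod 2)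
          (((Q'.erase q0).image y : Finset (E → ZMod 2)) : Set (E → ZMod 2)) := by
        rw [← Finset.add_sum_erase _ _ hq0] at hsum'
        rw [eq_neg_of_add_eq_zero_left hsum']
        exact Submodule.neg_mem _ (Submodule.sum_mem _ hmem)
      rw [hc]
      refine Submodule.sum_mem _ fun q hq => Submodule.smul_mem _ _ ?_
      by_cases h : q = q0
      · rw [h]; exact hq0m
      · exact hmem q (Finset.mem_erase.2 ⟨h, hq⟩)
    have h6 := Submodule.finrank_mono hle
    have h7 := finrank_span_finset_le_card (R := ZMod 2) ((Q'.erase q0).image y)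
    have h8 := (Finset.card_image_le (s := Q'.erase q0) (f := y))
    have h9 := Finset.card_erase_of_mem hq0
    have h10 : 0 < Q'.card := Finset.card_pos.2 ⟨q0, hq0⟩
    have h7' : Module.finrank (ZMod 2) (Submodule.span (ZMod 2)
        (((Q'.erase q0).image y : Finset (E → ZMod 2)) : Set (E → ZMod 2)))
        ≤ ((Q'.erase q0).image y).card := h7
    omega

end Count

/-! ### Chains on the square grid -/

section Grid

/-- edges of the square grid: `((i,j), false)` is horizontal, `((i,j), true)` is vertical -/
abbrev GE : Type := (ℤ × ℤ) × Bool

/-- lower end of a grid edge -/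
def gsrc (e : GE) : ℤ × ℤ := e.1
/-- upper end of a grid edge -/
def gtgt (e : GE) : ℤ × ℤ := if e.2 then (e.1.1, e.1.2 + 1) else (e.1.1 + 1, e.1.2)
/-- a face at a grid edge -/
def gF1 (e : GE) : ℤ × ℤ := e.1
/-- the other face at a grid edge -/
def gF2 (e : GE) : ℤ × ℤ := if e.2 then (e.1.1 - 1, e.1.2) else (e.1.1, e.1.2 - 1)

/-- adjacency in the grid -/
def gadj (a b : ℤ × ℤ) : Prop :=
  ∃ e : GE, (gsrc e = a ∧ gtgt e = b) ∨ (gsrc e = b ∧ gtgt e = a)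

/-- boundary -/
def gBd : (GE → ZMod 2) →ₗ[ZMod 2] (ℤ × ℤ → ZMod 2) where
  toFun z c := z (c, false) + z ((c.1 - 1, c.2), false) + z (c, true) + z ((c.1, c.2 - 1), true)
  map_add' x y := by
    funext c
    simp only [Pi.add_apply]
    ring
  map_smul' k y := by
    funext c
    simp only [Pi.smul_apply, smul_eq_mul, RingHom.id_apply]
    ring

lemma gBd_apply (z : GE → ZMod 2) (c : ℤ × ℤ) : gBd z c =
    z (c, false) + z ((c.1 - 1, c.2), false) + z (c, true) + z ((c.1, c.2 - 1), true) := rfl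

/-- coboundary of a face function -/
def gCo (w : ℤ × ℤ → ZMod 2) (e : GE) : ZMod 2 := w (gF1 e) + w (gF2 e)

lemma gBd_gCo (w : ℤ × ℤ → ZMod 2) : gBd (gCo w) = 0 := by
  funext c
  simp only [gBd_apply, gCo, gF1, gF2, Pi.zero_apply, if_true, Bool.false_eq_true, if_false]
  have h : (2 : ZMod 2) = 0 := rfl
  linear_combination (w (c.1, c.2) + w (c.1, c.2 - 1) + w (c.1 - 1, c.2)
    + w (c.1 - 1, c.2 - 1)) * h

lemma cycle_eq_co (z : GE → ZMod 2) (hz : gBd z = 0) (N : ℤ)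
    (hN : ∀ e : GE, e.1.2 ≤ N → z e = 0) : ∃ w, z = gCo w := by
  have h2 : (2 : ZMod 2) = 0 := rfl
  let w : ℤ × ℤ → ZMod 2 := fun c => ∑ k ∈ Finset.Ioc N c.2, z ((c.1, k), false)
  have w0 : ∀ i j, j ≤ N → w (i, j) = 0 := by
    intro i j hj
    simp only [w]
    rw [Finset.Ioc_eq_empty (by simpa using hj), Finset.sum_empty]
  have ws : ∀ i j, w (i, j) = w (i, j - 1) + z ((i, j), false) := by
    intro i j
    rcases le_or_gt j N with hj | hj
    · rw [w0 i j hj, w0 i (j - 1) (by omega), hN _ hj, add_zero]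
    · simp only [w]
      have : Finset.Ioc N j = insert j (Finset.Ioc N (j - 1)) := by
        ext k
        simp only [Finset.mem_Ioc, Finset.mem_insert]
        omega
      rw [this, Finset.sum_insert (by simp), add_comm]
  have wv : ∀ i j, w (i, j) + w (i - 1, j) = z ((i, j), true) := by
    intro i j
    rcases le_or_gt j N with hj | hj
    · rw [w0 _ _ hj, w0 _ _ hj, hN _ hj, add_zero]
    · induction j, hj.le using Int.le_induction with
      | base => exact absurd hj (lt_irrefl _)
      | succ m hm ih =>
        have ih' : w (i, m) + w (i - 1, m) = z ((i, m), true) := by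
          rcases hm.lt_or_eq with h | h
          · exact ih h
          · rw [w0 _ _ h.ge, w0 _ _ h.ge, hN _ h.ge, add_zero]
        have a := ws i (m + 1)
        have b := ws (i - 1) (m + 1)
        have c := congrFun hz (i, m + 1)
        simp only [gBd_apply, Pi.zero_apply, add_sub_cancel_right] at a b c
        rw [a, b]
        linear_combination ih' + c - (z ((i, m + 1), true)) * h2
  refine ⟨w, ?_⟩
  funext e
  obtain ⟨⟨i, j⟩, b⟩ := e
  cases b
  · simp only [gCo, gF1, gF2, Bool.false_eq_true, if_false]
    rw [ws i j]
    linear_combination (- w (i, j - 1)) * h2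
  · simp only [gCo, gF1, gF2, if_true]
    exact (wv i j).symm

/-- incidence number -/
noncomputable def gInc (B : Finset (ℤ × ℤ)) (g : GE) : ZMod 2 :=
  (if gsrc g ∈ B then 1 else 0) + (if gtgt g ∈ B then 1 else 0)

lemma gBd_eq_sum (S : Finset GE) (z : GE → ZMod 2) (hz : ∀ g, g ∉ S → z g = 0) (c : ℤ × ℤ) :
    gBd z c = ∑ g ∈ S, z g * ((if gsrc g = c then 1 else 0) + (if gtgt g = c then 1 else 0)) := by
  have one : ∀ g0 : GE, ∑ g ∈ S, z g * (if g = g0 then 1 else 0) = z g0 := by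
    intro g0
    simp only [mul_ite, mul_one, mul_zero]
    rw [Finset.sum_ite_eq']
    split_ifs with h
    · rfl
    · exact (hz _ h).symm
  rw [gBd_apply, ← one (c, false), ← one (c, true), ← one ((c.1 - 1, c.2), false),
    ← one ((c.1, c.2 - 1), true), ← Finset.sum_add_distrib, ← Finset.sum_add_distrib,
    ← Finset.sum_add_distrib]
  refine Finset.sum_congr rfl fun g _ => ?_
  rw [← mul_add, ← mul_add, ← mul_add]
  congr 1
  obtain ⟨⟨i, j⟩, b⟩ := g
  obtain ⟨k, l⟩ := c
  cases b
  · have e1 : ((i + 1 = k ∧ j = l)) ↔ (i = k - 1 ∧ j = l) := by omega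
    simp [gsrc, gtgt, e1]
  · have e1 : ((i = k ∧ j + 1 = l)) ↔ (i = k ∧ j = l - 1) := by omega
    simp [gsrc, gtgt, e1]

lemma sum_gBd (S : Finset GE) (z : GE → ZMod 2) (hz : ∀ g, g ∉ S → z g = 0)
    (B : Finset (ℤ × ℤ)) : ∑ c ∈ B, gBd z c = ∑ g ∈ S, z g * gInc B g := by
  simp only [gBd_eq_sum S z hz]
  rw [Finset.sum_comm]
  refine Finset.sum_congr rfl fun g _ => ?_
  rw [← Finset.mul_sum, Finset.sum_add_distrib, Finset.sum_ite_eq, Finset.sum_ite_eq]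
  rfl

lemma gBd_single (g : GE) : gBd (Pi.single g 1) = Pi.single (gsrc g) 1 + Pi.single (gtgt g) 1 := by
  funext c
  rw [gBd_eq_sum {g} (Pi.single g 1) (fun g' h => Pi.single_eq_of_ne (by simpa using h) _)]
  simp [Pi.single_apply, eq_comm]

lemma path_chain (B : Finset (ℤ × ℤ)) (a b : ℤ × ℤ) (ha : a ∈ B)
    (h : Relation.ReflTransGen (fun x y => gadj x y ∧ y ∈ B) a b) :
    ∃ P : GE → ZMod 2, (∀ g, P g ≠ 0 → gsrc g ∈ B ∧ gtgt g ∈ B) ∧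
      gBd P = Pi.single a 1 + Pi.single b 1 := by
  suffices hh : b ∈ B ∧ ∃ P : GE → ZMod 2, (∀ g, P g ≠ 0 → gsrc g ∈ B ∧ gtgt g ∈ B) ∧
      gBd P = Pi.single a 1 + Pi.single b 1 from hh.2
  induction h with
  | refl =>
    refine ⟨ha, 0, fun g hg => absurd rfl hg, ?_⟩
    rw [map_zero, CharTwo.add_self_eq_zero]
  | @tail b c _ hbc ih =>
    obtain ⟨hb, P, hP, hbd⟩ := ih
    obtain ⟨⟨g, hg⟩, hc⟩ := hbc
    refine ⟨hc, P + Pi.single g 1, ?_, ?_⟩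
    · intro g' hg'
      by_cases hgg : g' = g
      · subst hgg
        rcases hg with ⟨h1, h2⟩ | ⟨h1, h2⟩
        · exact ⟨h1 ▸ hb, h2 ▸ hc⟩
        · exact ⟨h1 ▸ hc, h2 ▸ hb⟩
      · apply hP
        rwa [Pi.add_apply, Pi.single_eq_of_ne hgg, add_zero] at hg'
    · rw [map_add, hbd, gBd_single]
      have hs : (Pi.single (gsrc g) 1 + Pi.single (gtgt g) 1 : ℤ × ℤ → ZMod 2)
          = Pi.single b 1 + Pi.single c 1 := by
        rcases hg with ⟨h1, h2⟩ | ⟨h1, h2⟩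
        · rw [h1, h2]
        · rw [h1, h2, add_comm]
      rw [hs]
      have := CharTwo.add_self_eq_zero (Pi.single b 1 : ℤ × ℤ → ZMod 2)
      linear_combination this

end Grid

section GridBound

/-- a grid edge representing a bipartite edge -/
def Reps {n : ℕ} (B : Fin n ⊕ Fin n → Finset (ℤ × ℤ)) (g : GE) (e : Fin n × Fin n) : Prop :=
  (gsrc g ∈ B (Sum.inl e.1) ∧ gtgt g ∈ B (Sum.inr e.2)) ∨
    (gsrc g ∈ B (Sum.inr e.2) ∧ gtgt g ∈ B (Sum.inl e.1))

/-- inner edges -/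
def GInner {n : ℕ} (B : Fin n ⊕ Fin n → Finset (ℤ × ℤ)) (g : GE) : Prop :=
  ∃ w, gsrc g ∈ B w ∧ gtgt g ∈ B w

variable {n : ℕ} {B : Fin n ⊕ Fin n → Finset (ℤ × ℤ)}

lemma reps_inj (hB : ∀ w w' c, c ∈ B w → c ∈ B w' → w = w') {g : GE} {e e' : Fin n × Fin n}
    (h : Reps B g e) (h' : Reps B g e') : e = e' := by
  rcases h with ⟨h1, h2⟩ | ⟨h1, h2⟩ <;> rcases h' with ⟨h3, h4⟩ | ⟨h3, h4⟩
  · exact Prod.ext (Sum.inl.inj (hB _ _ _ h1 h3)) (Sum.inr.inj (hB _ _ _ h2 h4))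
  · exact absurd (hB _ _ _ h1 h3) (by simp)
  · exact absurd (hB _ _ _ h1 h3) (by simp)
  · exact Prod.ext (Sum.inl.inj (hB _ _ _ h2 h4)) (Sum.inr.inj (hB _ _ _ h1 h3))

lemma reps_not_inner (hB : ∀ w w' c, c ∈ B w → c ∈ B w' → w = w') {g : GE} {e : Fin n × Fin n}
    (h : Reps B g e) (h' : GInner B g) : False := by
  obtain ⟨w, h3, h4⟩ := h'
  rcases h with ⟨h1, h2⟩ | ⟨h1, h2⟩
  · have := (hB _ _ _ h1 h3).trans (hB _ _ _ h4 h2)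
    simp at this
  · have := (hB _ _ _ h1 h3).trans (hB _ _ _ h4 h2)
    simp at this

lemma gInc_inner (hB : ∀ w w' c, c ∈ B w → c ∈ B w' → w = w') {g : GE} (h : GInner B g)
    (w : Fin n ⊕ Fin n) : gInc (B w) g = 0 := by
  obtain ⟨w', h1, h2⟩ := h
  unfold gInc
  by_cases hw : w = w'
  · subst hw
    rw [if_pos h1, if_pos h2]
    rfl
  · rw [if_neg (fun h => hw (hB _ _ _ h h1)), if_neg (fun h => hw (hB _ _ _ h h2)), add_zero]

lemma gInc_reps (hB : ∀ w w' c, c ∈ B w → c ∈ B w' → w = w') {g : GE} {e : Fin n × Fin n}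
    (h : Reps B g e) (w : Fin n ⊕ Fin n) : gInc (B w) g = if bInc e w then 1 else 0 := by
  have key : ∀ {c w1}, c ∈ B w1 → (c ∈ B w ↔ w1 = w) := fun {c w1} hc =>
    ⟨fun h' => hB _ _ _ hc h', fun h' => h' ▸ hc⟩
  unfold gInc
  rcases h with ⟨h1, h2⟩ | ⟨h1, h2⟩ <;> simp only [key h1, key h2] <;> cases w <;> simp [bInc]

theorem grid_bound (hn : 2 ≤ n) (E : Finset (Fin n × Fin n))
    (hne : ∀ w, (B w).Nonempty)
    (hB : ∀ w w' c, c ∈ B w → c ∈ B w' → w = w')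
    (hconn : ∀ w, ∀ a ∈ B w, ∀ b ∈ B w,
      Relation.ReflTransGen (fun x y => gadj x y ∧ y ∈ B w) a b)
    (hE : ∀ e ∈ E, ∃ a ∈ B (Sum.inl e.1), ∃ b ∈ B (Sum.inr e.2), gadj a b) :
    E.card + 4 ≤ 4 * n := by
  classical
  have hE' : ∀ e : E, ∃ g, Reps B g e.1 := by
    rintro ⟨e, he⟩
    obtain ⟨a, ha, b, hb, g, hg⟩ := hE e he
    refine ⟨g, ?_⟩
    rcases hg with ⟨h1, h2⟩ | ⟨h1, h2⟩
    · exact Or.inl ⟨h1 ▸ ha, h2 ▸ hb⟩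
    · exact Or.inr ⟨h1 ▸ hb, h2 ▸ ha⟩
  choose r hr using hE'
  choose ρ hρ using hne
  have rinj : Function.Injective r := by
    intro e e' h
    exact Subtype.ext (reps_inj hB (hr e) (h ▸ hr e'))
  -- the finite set of relevant edges
  let S : Finset GE := (Finset.univ.image r) ∪
    ((Finset.univ.biUnion B ×ˢ Finset.univ).filter fun g => GInner B g)
  have hS : ∀ g, g ∈ S ↔ (∃ e, r e = g) ∨ GInner B g := by
    intro g
    simp only [S, Finset.mem_union, Finset.mem_image, Finset.mem_univ, true_and,
      Finset.mem_filter, Finset.mem_product, Finset.mem_biUnion, and_true]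
    constructor
    · rintro (h | ⟨_, h⟩)
      · exact Or.inl h
      · exact Or.inr h
    · rintro (h | h)
      · exact Or.inl h
      · exact Or.inr ⟨⟨h.choose, h.choose_spec.1⟩, h⟩
  have lemC : ∀ z : GE → ZMod 2, gBd z = 0 → (∀ g, g ∉ S → z g = 0) →
      bBd E (fun e => z (r e)) = 0 := by
    intro z hz hzS
    funext w
    change ∑ e : E, (if bInc e.1 w then z (r e) else 0) = 0
    have h1 := sum_gBd S z hzS (B w)
    rw [hz] at h1
    simp only [Pi.zero_apply, Finset.sum_const_zero] at h1
    refine Eq.trans ?_ h1.symm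
    have h2 : ∑ g ∈ Finset.univ.image r, z g * gInc (B w) g = ∑ g ∈ S, z g * gInc (B w) g := by
      refine Finset.sum_subset Finset.subset_union_left fun g hg hg' => ?_
      rcases (hS g).1 hg with h | h
      · exact absurd (by simpa using h) hg'
      · rw [gInc_inner hB h, mul_zero]
    rw [← h2, Finset.sum_image (fun a _ b _ h => rinj h)]
    refine Finset.sum_congr rfl fun e _ => ?_
    rw [gInc_reps hB (hr e)]
    by_cases hb : bInc e.1 w
    · rw [if_pos hb, if_pos hb, mul_one]
    · rw [if_neg hb, if_neg hb, mul_zero]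
  have lemD : ∀ y : E → ZMod 2, bBd E y = 0 → ∃ z : GE → ZMod 2, gBd z = 0 ∧
      (∀ g, g ∉ S → z g = 0) ∧ ∀ e, z (r e) = y e := by
    intro y hy
    have hP : ∀ e : E, ∃ P : GE → ZMod 2, (∀ g, P g ≠ 0 → GInner B g) ∧
        gBd P = Pi.single (gsrc (r e)) 1 + Pi.single (gtgt (r e)) 1
          + Pi.single (ρ (Sum.inl e.1.1)) 1 + Pi.single (ρ (Sum.inr e.1.2)) 1 := by
      intro e
      have gen : ∀ w a, a ∈ B w → ∃ P : GE → ZMod 2, (∀ g, P g ≠ 0 → GInner B g) ∧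
          gBd P = Pi.single a 1 + Pi.single (ρ w) 1 := by
        intro w a ha
        obtain ⟨P, hP1, hP2⟩ := path_chain (B w) a (ρ w) ha (hconn w a ha _ (hρ w))
        exact ⟨P, fun g hg => ⟨w, hP1 g hg⟩, hP2⟩
      have comb : ∀ P P' : GE → ZMod 2, (∀ g, P g ≠ 0 → GInner B g) →
          (∀ g, P' g ≠ 0 → GInner B g) → (∀ g, (P + P') g ≠ 0 → GInner B g) := by
        intro P P' h h' g hg
        by_cases h0 : P g = 0
        · refine h' g ?_
          rwa [Pi.add_apply, h0, zero_add] at hg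
        · exact h g h0
      rcases hr e with ⟨h1, h2⟩ | ⟨h1, h2⟩
      · obtain ⟨P, a, b⟩ := gen _ _ h1
        obtain ⟨P', a', b'⟩ := gen _ _ h2
        refine ⟨P + P', comb P P' a a', ?_⟩
        rw [map_add, b, b']
        ring
      · obtain ⟨P, a, b⟩ := gen _ _ h1
        obtain ⟨P', a', b'⟩ := gen _ _ h2
        refine ⟨P + P', comb P P' a a', ?_⟩
        rw [map_add, b, b']
        ring
    choose P hPi hPb using hP
    refine ⟨∑ e : E, y e • (Pi.single (r e) 1 + P e), ?_, ?_, ?_⟩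
    · rw [map_sum]
      have hterm : ∀ e : E, gBd (y e • (Pi.single (r e) 1 + P e)) =
          ∑ w, (if bInc e.1 w then y e else 0) • (Pi.single (ρ w) 1 : ℤ × ℤ → ZMod 2) := by
        intro e
        rw [map_smul, map_add, gBd_single, hPb, Fintype.sum_sum_type]
        have b1 : ∀ i, (if bInc e.1 (Sum.inl i) then y e else 0) = if e.1.1 = i then y e else 0 :=
          fun i => if_congr Iff.rfl rfl rfl
        have b2 : ∀ i, (if bInc e.1 (Sum.inr i) then y e else 0) = if e.1.2 = i then y e else 0 :=
          fun i => if_congr Iff.rfl rfl rfl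
        simp only [b1, b2, ite_smul, zero_smul, Finset.sum_ite_eq, Finset.mem_univ, if_true]
        rw [← smul_add]
        congr 1
        have q1 := CharTwo.add_self_eq_zero (Pi.single (gsrc (r e)) 1 : ℤ × ℤ → ZMod 2)
        have q2 := CharTwo.add_self_eq_zero (Pi.single (gtgt (r e)) 1 : ℤ × ℤ → ZMod 2)
        linear_combination q1 + q2
      rw [Finset.sum_congr rfl fun e _ => hterm e, Finset.sum_comm]
      refine Finset.sum_eq_zero fun w _ => ?_
      rw [← Finset.sum_smul]
      have := congrFun hy w
      change ∑ e : E, (if bInc e.1 w then y e else 0) = 0 at this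
      rw [this, zero_smul]
    · intro g hg
      rw [hS] at hg
      push Not at hg
      rw [Finset.sum_apply]
      refine Finset.sum_eq_zero fun e _ => ?_
      rw [Pi.smul_apply, Pi.add_apply, Pi.single_eq_of_ne (hg.1 e).symm, zero_add]
      by_cases h0 : P e g = 0
      · rw [h0, smul_zero]
      · exact absurd (hPi e g h0) hg.2
    · intro e
      rw [Finset.sum_apply]
      have h0 : ∀ e', P e' (r e) = 0 := by
        intro e'
        by_contra h
        exact reps_not_inner hB (hr e) (hPi e' _ h)
      simp only [Pi.smul_apply, Pi.add_apply, h0, add_zero, smul_eq_mul]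
      rw [Finset.sum_eq_single e]
      · simp
      · intro b _ hb
        rw [Pi.single_eq_of_ne (fun h => hb (rinj h).symm), mul_zero]
      · intro h
        exact absurd (Finset.mem_univ _) h
  -- classes of faces
  let R : ℤ × ℤ → ℤ × ℤ → Prop := fun a b => ∃ g, g ∉ S ∧ a = gF1 g ∧ b = gF2 g
  let mk : ℤ × ℤ → Quot R := Quot.mk R
  have hmk : ∀ g, g ∉ S → mk (gF1 g) = mk (gF2 g) := fun g hg => Quot.sound ⟨g, hg, rfl, rfl⟩
  let y : Quot R → E → ZMod 2 := fun q e =>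
    (if mk (gF1 (r e)) = q then 1 else 0) + (if mk (gF2 (r e)) = q then 1 else 0)
  let Qf : Finset (Quot R) := (Finset.univ.image fun e => mk (gF1 (r e))) ∪
    (Finset.univ.image fun e => mk (gF2 (r e)))
  have hq1 : ∀ e, mk (gF1 (r e)) ∈ Qf := fun e =>
    Finset.mem_union_left _ (Finset.mem_image_of_mem _ (Finset.mem_univ e))
  have hq2 : ∀ e, mk (gF2 (r e)) ∈ Qf := fun e =>
    Finset.mem_union_right _ (Finset.mem_image_of_mem _ (Finset.mem_univ e))
  refine count_bound hn E Qf y ?_ ?_ ?_ ?_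
  · intro q _
    refine lemC (gCo fun c => if mk c = q then 1 else 0) (gBd_gCo _) ?_
    intro g hg
    simp only [gCo]
    rw [hmk g hg]
    exact CharTwo.add_self_eq_zero _
  · intro x hx
    obtain ⟨z, hz, hzS, hzr⟩ := lemD x hx
    obtain ⟨N, hN⟩ : ∃ N : ℤ, ∀ g ∈ S, N < g.1.2 := by
      obtain ⟨N, hN⟩ := (S.image fun g => g.1.2).bddBelow
      refine ⟨N - 1, fun g hg => ?_⟩
      have := hN (Finset.mem_coe.2 (Finset.mem_image_of_mem _ hg))
      omega
    obtain ⟨w, hw⟩ := cycle_eq_co z hz N (fun g hg => hzS g fun h => by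
      have := hN g h
      omega)
    have hwR : ∀ a b, R a b → w a = w b := by
      rintro a b ⟨g, hg, rfl, rfl⟩
      have h0 := hzS g hg
      rw [hw] at h0
      exact CharTwo.add_eq_zero.1 h0
    refine ⟨Quot.lift w hwR, ?_⟩
    funext e
    rw [← hzr e, hw, Finset.sum_apply]
    simp only [Pi.smul_apply, smul_eq_mul, y, mul_add, Finset.sum_add_distrib, mul_ite, mul_one,
      mul_zero, Finset.sum_ite_eq, if_pos (hq1 e), if_pos (hq2 e)]
    rfl
  · funext e
    rw [Finset.sum_apply]
    simp only [y, Finset.sum_add_distrib, Finset.sum_ite_eq, if_pos (hq1 e), if_pos (hq2 e)]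
    rfl
  · intro e
    refine le_trans (Finset.card_le_card (t := {mk (gF1 (r e)), mk (gF2 (r e))}) ?_)
      Finset.card_le_two
    intro q hq
    rw [Finset.mem_filter] at hq
    rw [Finset.mem_insert, Finset.mem_singleton]
    by_contra hcon
    push Not at hcon
    refine hq.2 ?_
    simp only [y]
    rw [if_neg (Ne.symm hcon.1), if_neg (Ne.symm hcon.2), add_zero]

end GridBound

section Minor

/-- connectedness of a set of cells -/
def GConn (B : Set (ℤ × ℤ)) : Prop :=
  ∀ a ∈ B, ∀ b ∈ B, Relation.ReflTransGen (fun x y => gadj x y ∧ x ∈ B ∧ y ∈ B) a b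

lemma gadj_symm {a b : ℤ × ℤ} (h : gadj a b) : gadj b a := by
  obtain ⟨e, h⟩ := h
  exact ⟨e, h.symm⟩

lemma rtg_symm {B : Set (ℤ × ℤ)} {a b : ℤ × ℤ}
    (h : Relation.ReflTransGen (fun x y => gadj x y ∧ x ∈ B ∧ y ∈ B) a b) :
    Relation.ReflTransGen (fun x y => gadj x y ∧ x ∈ B ∧ y ∈ B) b a := by
  induction h with
  | refl => exact Relation.ReflTransGen.refl
  | tail _ h ih => exact Relation.ReflTransGen.head ⟨gadj_symm h.1, h.2.2, h.2.1⟩ ih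

lemma rtg_mono {B B' : Set (ℤ × ℤ)} (hBB : B ⊆ B') {a b : ℤ × ℤ}
    (h : Relation.ReflTransGen (fun x y => gadj x y ∧ x ∈ B ∧ y ∈ B) a b) :
    Relation.ReflTransGen (fun x y => gadj x y ∧ x ∈ B' ∧ y ∈ B') a b :=
  Relation.ReflTransGen.mono (fun _ _ h => ⟨h.1, hBB h.2.1, hBB h.2.2⟩) _ _ h

theorem minor_bound {n : ℕ} (hn : 2 ≤ n) (E : Finset (Fin n × Fin n))
    (K : Fin n ⊕ Fin n → Set (ℤ × ℤ)) (M : E → Set (ℤ × ℤ))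
    (Kfin : ∀ w, (K w).Finite) (Mfin : ∀ e, (M e).Finite)
    (Kne : ∀ w, (K w).Nonempty) (Kconn : ∀ w, GConn (K w)) (Mconn : ∀ e, GConn (M e))
    (KK : ∀ w w', w ≠ w' → Disjoint (K w) (K w'))
    (MM : ∀ e e', e ≠ e' → Disjoint (M e) (M e'))
    (MK : ∀ e w, w ≠ Sum.inl e.1.1 → w ≠ Sum.inr e.1.2 → Disjoint (M e) (K w))
    (Ms : ∀ e, (M e ∩ K (Sum.inl e.1.1)).Nonempty)
    (Mt : ∀ e, (M e ∩ K (Sum.inr e.1.2)).Nonempty) :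
    E.card + 4 ≤ 4 * n := by
  classical
  choose x hxM hxK using Ms
  choose y hyM hyK using Mt
  let D : E → Set (ℤ × ℤ) := fun e => M e \ K (Sum.inr e.1.2)
  have hxD : ∀ e, x e ∈ D e := fun e =>
    ⟨hxM e, fun h => Set.disjoint_left.1 (KK _ _ (by simp)) (hxK e) h⟩
  let P : E → Set (ℤ × ℤ) := fun e =>
    {c | Relation.ReflTransGen (fun a b => gadj a b ∧ a ∈ D e ∧ b ∈ D e) (x e) c}
  have hPD : ∀ e, P e ⊆ D e := by
    intro e c hc
    have hc' : Relation.ReflTransGen (fun a b => gadj a b ∧ a ∈ D e ∧ b ∈ D e) (x e) c := hc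
    rcases Relation.ReflTransGen.cases_tail hc' with h | ⟨d, _, h⟩
    · rw [h]; exact hxD e
    · exact h.2.2
  have hxP : ∀ e, x e ∈ P e := fun e => Relation.ReflTransGen.refl
  have hPx : ∀ e, ∀ c ∈ P e,
      Relation.ReflTransGen (fun a b => gadj a b ∧ a ∈ P e ∧ b ∈ P e) (x e) c := by
    intro e c hc
    have hc' : Relation.ReflTransGen (fun a b => gadj a b ∧ a ∈ D e ∧ b ∈ D e) (x e) c := hc
    induction hc' with
    | refl => exact Relation.ReflTransGen.refl
    | @tail b c hb h ih => exact (ih hb).tail ⟨h.1, hb, hc⟩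
  have hedge : ∀ e, ∃ c ∈ P e, ∃ d ∈ K (Sum.inr e.1.2), gadj c d := by
    intro e
    by_contra hcon
    push Not at hcon
    have hall : ∀ c, Relation.ReflTransGen (fun a b => gadj a b ∧ a ∈ M e ∧ b ∈ M e) (x e) c →
        c ∈ P e := by
      intro c hc
      induction hc with
      | refl => exact hxP e
      | @tail b c hb h ih =>
        have hcK : c ∉ K (Sum.inr e.1.2) := fun h' => hcon b ih c h' h.1
        exact Relation.ReflTransGen.tail ih ⟨h.1, hPD e ih, h.2.2, hcK⟩
    exact (hPD e (hall (y e) (Mconn e _ (hxM e) _ (hyM e)))).2 (hyK e)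
  let B : Fin n ⊕ Fin n → Set (ℤ × ℤ) := fun w =>
    K w ∪ ⋃ e : {e : E // Sum.inl e.1.1 = w}, P e.1
  have hKB : ∀ w, K w ⊆ B w := fun w => Set.subset_union_left
  have hPB : ∀ e : E, P e ⊆ B (Sum.inl e.1.1) := fun e c hc =>
    Or.inr (Set.mem_iUnion.2 ⟨⟨e, rfl⟩, hc⟩)
  have hBmem : ∀ w c, c ∈ B w → c ∈ K w ∨ ∃ e : E, Sum.inl e.1.1 = w ∧ c ∈ P e := by
    rintro w c (h | h)
    · exact Or.inl h
    · obtain ⟨⟨e, he⟩, hc⟩ := Set.mem_iUnion.1 h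
      exact Or.inr ⟨e, he, hc⟩
  have Bfin : ∀ w, (B w).Finite := by
    intro w
    refine (Kfin w).union (Set.finite_iUnion fun e => ?_)
    exact (Mfin e.1).subset fun c hc => (hPD _ hc).1
  have hKP : ∀ w c (e : E), c ∈ K w → c ∈ P e → w = Sum.inl e.1.1 := by
    intro w c e h h'
    by_contra hw
    have hD := hPD e h'
    by_cases hw' : w = Sum.inr e.1.2
    · exact hD.2 (hw' ▸ h)
    · exact Set.disjoint_left.1 (MK e w hw hw') hD.1 h
  have hroot : ∀ w, ∀ c ∈ B w, ∃ k ∈ K w,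
      Relation.ReflTransGen (fun a b => gadj a b ∧ a ∈ B w ∧ b ∈ B w) k c := by
    intro w c hc
    rcases hBmem w c hc with h | ⟨e, rfl, h⟩
    · exact ⟨c, h, Relation.ReflTransGen.refl⟩
    · exact ⟨x e, hxK e, rtg_mono (hPB e) (hPx e c h)⟩
  refine grid_bound (B := fun w => (Bfin w).toFinset) hn E ?_ ?_ ?_ ?_
  · intro w
    obtain ⟨k, hk⟩ := Kne w
    exact ⟨k, by simpa using hKB w hk⟩
  · intro w w' c h h'
    rw [Set.Finite.mem_toFinset] at h h'
    rcases hBmem w c h with h1 | ⟨e, rfl, h1⟩ <;> rcases hBmem w' c h' with h2 | ⟨e', rfl, h2⟩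
    · by_contra hw
      exact Set.disjoint_left.1 (KK w w' hw) h1 h2
    · exact hKP _ _ _ h1 h2
    · exact (hKP _ _ _ h2 h1).symm
    · by_cases he : e = e'
      · rw [he]
      · exact absurd (hPD _ h2).1 (Set.disjoint_left.1 (MM e e' he) (hPD _ h1).1)
  · intro w a ha b hb
    rw [Set.Finite.mem_toFinset] at ha hb
    obtain ⟨k, hk, hka⟩ := hroot w a ha
    obtain ⟨l, hl, hlb⟩ := hroot w b hb
    have hkl := rtg_mono (hKB w) (Kconn w k hk l hl)
    refine Relation.ReflTransGen.mono ?_ _ _ ((rtg_symm hka).trans (hkl.trans hlb))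
    rintro p q ⟨h1, _, h3⟩
    exact ⟨h1, by simpa using h3⟩
  · intro e he
    obtain ⟨c, hc, d, hd, hcd⟩ := hedge ⟨e, he⟩
    exact ⟨c, by simpa using hPB ⟨e, he⟩ hc, d, by simpa using hKB _ hd, hcd⟩

end Minor

section Hat

/-- the closed cell -/
def gcell (L : ℝ) (c : ℤ × ℤ) : Set (ℝ × ℝ) :=
  {p | (c.1 : ℝ) ≤ L * p.1 ∧ L * p.1 ≤ c.1 + 1 ∧ (c.2 : ℝ) ≤ L * p.2 ∧ L * p.2 ≤ c.2 + 1}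

/-- cells meeting a set -/
def hat (L : ℝ) (X : Set (ℝ × ℝ)) : Set (ℤ × ℤ) := {c | ∃ p ∈ X, p ∈ gcell L c}

lemma gcell_closed (L : ℝ) (c : ℤ × ℤ) : IsClosed (gcell L c) := by
  have h1 : Continuous fun p : ℝ × ℝ => L * p.1 := by fun_prop
  have h2 : Continuous fun p : ℝ × ℝ => L * p.2 := by fun_prop
  exact (isClosed_le continuous_const h1).inter ((isClosed_le h1 continuous_const).inter
    ((isClosed_le continuous_const h2).inter (isClosed_le h2 continuous_const)))

lemma floor_cell (L : ℝ) (p : ℝ × ℝ) : p ∈ gcell L (⌊L * p.1⌋, ⌊L * p.2⌋) :=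
  ⟨Int.floor_le _, (Int.lt_floor_add_one _).le, Int.floor_le _, (Int.lt_floor_add_one _).le⟩

lemma hat_mem_floor {L : ℝ} {X : Set (ℝ × ℝ)} {p : ℝ × ℝ} (hp : p ∈ X) :
    (⌊L * p.1⌋, ⌊L * p.2⌋) ∈ hat L X := ⟨p, hp, floor_cell L p⟩

lemma hat_finite (L : ℝ) {X : Set (ℝ × ℝ)} (hX : IsCompact X) : (hat L X).Finite := by
  obtain ⟨R, hR⟩ := hX.isBounded.exists_norm_le
  obtain ⟨N, hN⟩ := exists_nat_gt (|L| * R + 1)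
  refine ((Set.finite_Icc (-(N : ℤ)) N).prod (Set.finite_Icc (-(N : ℤ)) N)).subset ?_
  rintro ⟨i, j⟩ ⟨p, hp, h1, h2, h3, h4⟩
  have hb : ∀ x : ℝ, |x| ≤ R → |L * x| ≤ |L| * R := fun x hx => by
    rw [abs_mul]
    exact mul_le_mul_of_nonneg_left hx (abs_nonneg _)
  have ha1 := abs_le.1 (hb p.1 ((norm_fst_le p).trans (hR p hp)))
  have ha2 := abs_le.1 (hb p.2 ((norm_snd_le p).trans (hR p hp)))
  simp only at h1 h2 h3 h4
  refine ⟨⟨?_, ?_⟩, ⟨?_, ?_⟩⟩ <;> (simp only; rify; linarith)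

lemma hat_disjoint {X Y : Set (ℝ × ℝ)} (hX : IsCompact X) (hY : IsCompact Y)
    (hd : Disjoint X Y) : ∀ᶠ L : ℝ in Filter.atTop, Disjoint (hat L X) (hat L Y) := by
  obtain ⟨r, hr, h⟩ := Metric.exists_pos_forall_lt_edist hX hY.isClosed hd
  filter_upwards [Filter.eventually_gt_atTop (1 / (r : ℝ)), Filter.eventually_gt_atTop 0]
    with L hL hL0
  rw [Set.disjoint_left]
  rintro c ⟨p, hp, h1, h2, h3, h4⟩ ⟨q, hq, k1, k2, k3, k4⟩
  have h5 := h p hp q hq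
  have hr' : (0 : ℝ) < r := hr
  have hLr : 1 < L * r := by rwa [div_lt_iff₀ hr'] at hL
  have h6 : dist p q ≤ r := by
    rw [Prod.dist_eq]
    refine max_le ?_ ?_
    · rw [Real.dist_eq, abs_le]
      constructor <;> nlinarith
    · rw [Real.dist_eq, abs_le]
      constructor <;> nlinarith
  rw [edist_nndist] at h5
  have h7 : r < nndist p q := by exact_mod_cast h5
  have h8 : (r : ℝ) < dist p q := by exact_mod_cast h7
  linarith

lemma hat_step {L : ℝ} {X : Set (ℝ × ℝ)} {x : ℝ × ℝ} (hx : x ∈ X) {c d : ℤ × ℤ}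
    (hc : x ∈ gcell L c) (hd : x ∈ gcell L d) :
    Relation.ReflTransGen (fun a b => gadj a b ∧ a ∈ hat L X ∧ b ∈ hat L X) c d := by
  obtain ⟨i, j⟩ := c
  obtain ⟨k, l⟩ := d
  have hm : x ∈ gcell L (i, l) := ⟨hc.1, hc.2.1, hd.2.2.1, hd.2.2.2⟩
  have b1 : i ≤ k + 1 := by
    have := hc.1.trans hd.2.1
    simp only at this
    exact_mod_cast this
  have b2 : k ≤ i + 1 := by
    have := hd.1.trans hc.2.1
    simp only at this
    exact_mod_cast this
  have b3 : j ≤ l + 1 := by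
    have := hc.2.2.1.trans hd.2.2.2
    simp only at this
    exact_mod_cast this
  have b4 : l ≤ j + 1 := by
    have := hd.2.2.1.trans hc.2.2.2
    simp only at this
    exact_mod_cast this
  have s1 : Relation.ReflTransGen (fun a b => gadj a b ∧ a ∈ hat L X ∧ b ∈ hat L X)
      (i, j) (i, l) := by
    by_cases h : j = l
    · rw [h]
    · refine Relation.ReflTransGen.single ⟨?_, ⟨x, hx, hc⟩, ⟨x, hx, hm⟩⟩
      rcases lt_or_gt_of_ne h with h | h
      · refine ⟨((i, j), true), Or.inl ⟨rfl, ?_⟩⟩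
        simp [gtgt]
        omega
      · refine ⟨((i, l), true), Or.inr ⟨rfl, ?_⟩⟩
        simp [gtgt]
        omega
  have s2 : Relation.ReflTransGen (fun a b => gadj a b ∧ a ∈ hat L X ∧ b ∈ hat L X)
      (i, l) (k, l) := by
    by_cases h : i = k
    · rw [h]
    · refine Relation.ReflTransGen.single ⟨?_, ⟨x, hx, hm⟩, ⟨x, hx, hd⟩⟩
      rcases lt_or_gt_of_ne h with h | h
      · refine ⟨((i, l), false), Or.inl ⟨rfl, ?_⟩⟩
        simp [gtgt]
        omega
      · refine ⟨((k, l), false), Or.inr ⟨rfl, ?_⟩⟩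
        simp [gtgt]
        omega
  exact s1.trans s2

lemma hat_conn (L : ℝ) {X : Set (ℝ × ℝ)} (hX : IsCompact X) (hc : IsPreconnected X) :
    GConn (hat L X) := by
  intro a ha b hb
  by_contra hab
  let A : Set (ℤ × ℤ) := {c | c ∈ hat L X ∧
    Relation.ReflTransGen (fun x y => gadj x y ∧ x ∈ hat L X ∧ y ∈ hat L X) a c}
  have hfin := hat_finite L hX
  have hAf : A.Finite := hfin.subset fun c h => h.1
  have hBf : (hat L X \ A).Finite := hfin.subset fun c h => h.1
  have h := isPreconnected_closed_iff.1 hc (⋃ c ∈ A, gcell L c) (⋃ c ∈ hat L X \ A, gcell L c)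
    (hAf.isClosed_biUnion fun c _ => gcell_closed L c)
    (hBf.isClosed_biUnion fun c _ => gcell_closed L c) ?_ ?_ ?_
  · obtain ⟨x, hx, h1, h2⟩ := h
    simp only [Set.mem_iUnion] at h1 h2
    obtain ⟨c, hcA, hxc⟩ := h1
    obtain ⟨d, hdB, hxd⟩ := h2
    exact hdB.2 ⟨hdB.1, hcA.2.trans (hat_step hx hxc hxd)⟩
  · intro p hp
    have hm := hat_mem_floor (L := L) hp
    by_cases hA : (⌊L * p.1⌋, ⌊L * p.2⌋) ∈ A
    · exact Or.inl (Set.mem_biUnion hA (floor_cell L p))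
    · exact Or.inr (Set.mem_biUnion (show _ ∈ hat L X \ A from ⟨hm, hA⟩) (floor_cell L p))
  · obtain ⟨p, hp, hpa⟩ := ha
    exact ⟨p, hp, Set.mem_biUnion (show a ∈ A from ⟨⟨p, hp, hpa⟩, Relation.ReflTransGen.refl⟩) hpa⟩
  · obtain ⟨p, hp, hpb⟩ := hb
    exact ⟨p, hp, Set.mem_biUnion (show b ∈ hat L X \ A from ⟨⟨p, hp, hpb⟩, fun h => hab h.2⟩) hpb⟩

end Hat

section Planar

theorem planar_bound {V : Type*} (G : SimpleGraph V) (hG : IsPlanar G) {n : ℕ} (hn : 2 ≤ n)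
    (g : Fin n ⊕ Fin n → V) (hg : Function.Injective g) (E : Finset (Fin n × Fin n))
    (hE : ∀ e ∈ E, G.Adj (g (Sum.inl e.1)) (g (Sum.inr e.2))) :
    E.card + 4 ≤ 4 * n := by
  classical
  obtain ⟨f, γ, hf, hcont, hends, hinj, hint, hcross⟩ := hG
  have hc : ∀ e : E, ∃ c : Set.Icc (0 : ℝ) 1 → ℝ × ℝ, Continuous c ∧ Function.Injective c ∧
      c 0 = f (g (Sum.inl e.1.1)) ∧ c 1 = f (g (Sum.inr e.1.2)) ∧
      (∀ t, t ≠ 0 → t ≠ 1 → ∀ v, c t ≠ f v) ∧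
      ∀ t, ∃ t', c t = γ ⟨s(g (Sum.inl e.1.1), g (Sum.inr e.1.2)), hE e.1 e.2⟩ t' := by
    intro e
    set d : G.edgeSet := ⟨s(g (Sum.inl e.1.1), g (Sum.inr e.1.2)), hE e.1 e.2⟩ with hd
    have hint' : ∀ t : Set.Icc (0 : ℝ) 1, t ≠ 0 → t ≠ 1 → ∀ v, γ d t ≠ f v := by
      intro t h0 h1
      exact hint d t (fun h => h0 (Subtype.ext h)) (fun h => h1 (Subtype.ext h))
    obtain ⟨u, v, huv, h0, h1⟩ := hends d
    have h0' : γ d 0 = f u := h0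
    have h1' : γ d 1 = f v := h1
    rw [hd] at huv
    rcases Sym2.eq_iff.1 huv with ⟨hu, hv⟩ | ⟨hu, hv⟩
    · exact ⟨γ d, hcont d, hinj d, by rw [h0', hu], by rw [h1', hv], hint', fun t => ⟨t, rfl⟩⟩
    · refine ⟨fun t => γ d (unitInterval.symm t), (hcont d).comp unitInterval.continuous_symm,
        (hinj d).comp (Function.LeftInverse.injective unitInterval.symm_symm), ?_, ?_, ?_, fun t => ⟨_, rfl⟩⟩
      · change γ d (unitInterval.symm 0) = _
        rw [unitInterval.symm_zero, hu]
        exact h1'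
      · change γ d (unitInterval.symm 1) = _
        rw [unitInterval.symm_one, hv]
        exact h0'
      · intro t ht0 ht1
        refine hint' _ (fun h => ht1 ?_) (fun h => ht0 ?_)
        · have := congrArg unitInterval.symm h
          rwa [unitInterval.symm_symm, unitInterval.symm_zero] at this
        · have := congrArg unitInterval.symm h
          rwa [unitInterval.symm_symm, unitInterval.symm_one] at this
  choose c ccont cinj c0 c1 cint cran using hc
  let p : Fin n ⊕ Fin n → ℝ × ℝ := fun w => f (g w)
  have hp : Function.Injective p := hf.comp hg
  have hends2 : ∀ e t v, c e t = f v → t = 0 ∨ t = 1 := by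
    intro e t v h
    by_contra hcon
    push Not at hcon
    exact cint e t hcon.1 hcon.2 v h
  have hmeet : ∀ e e' t t', e ≠ e' → c e t = c e' t' → (t = 0 ∨ t = 1) ∧ (t' = 0 ∨ t' = 1) := by
    intro e e' t t' hne h
    obtain ⟨s, hs⟩ := cran e t
    obtain ⟨s', hs'⟩ := cran e' t'
    have hdne : (⟨s(g (Sum.inl e.1.1), g (Sum.inr e.1.2)), hE e.1 e.2⟩ : G.edgeSet) ≠
        ⟨s(g (Sum.inl e'.1.1), g (Sum.inr e'.1.2)), hE e'.1 e'.2⟩ := by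
      intro hh
      have hh' := congrArg Subtype.val hh
      simp only at hh'
      rcases Sym2.eq_iff.1 hh' with ⟨a, b⟩ | ⟨a, b⟩
      · exact hne (Subtype.ext (Prod.ext (Sum.inl.inj (hg a)) (Sum.inr.inj (hg b))))
      · exact absurd (hg a) (by simp)
    obtain ⟨v, hv⟩ := hcross _ _ hdne s s' (by rw [← hs, ← hs', h])
    rw [← hs] at hv
    exact ⟨hends2 e t v hv.symm, hends2 e' t' v (by rw [← h, hv])⟩
  let a : Set.Icc (0 : ℝ) 1 := ⟨1 / 3, by norm_num, by norm_num⟩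
  let b : Set.Icc (0 : ℝ) 1 := ⟨2 / 3, by norm_num, by norm_num⟩
  have hab : a < b := by
    change (1 / 3 : ℝ) < 2 / 3
    norm_num
  have h0a : 0 < a := by
    change (0 : ℝ) < 1 / 3
    norm_num
  have hb1 : b < 1 := by
    change (2 / 3 : ℝ) < 1
    norm_num
  let X : E → Fin n ⊕ Fin n → Set (ℝ × ℝ) := fun e w =>
    (if Sum.inl e.1.1 = w then c e '' Set.Iic a else ∅) ∪
      (if Sum.inr e.1.2 = w then c e '' Set.Ici b else ∅)
  let K : Fin n ⊕ Fin n → Set (ℝ × ℝ) := fun w => {p w} ∪ ⋃ e, X e w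
  let M : E → Set (ℝ × ℝ) := fun e => c e '' Set.Icc a b
  have hX : ∀ e w x, x ∈ X e w ↔ ∃ t, c e t = x ∧
      ((Sum.inl e.1.1 = w ∧ t ≤ a) ∨ (Sum.inr e.1.2 = w ∧ b ≤ t)) := by
    intro e w x
    constructor
    · rintro (h | h)
      · split_ifs at h with h1
        · obtain ⟨t, ht, rfl⟩ := h
          exact ⟨t, rfl, Or.inl ⟨h1, ht⟩⟩
        · exact absurd h (Set.notMem_empty _)
      · split_ifs at h with h1
        · obtain ⟨t, ht, rfl⟩ := h
          exact ⟨t, rfl, Or.inr ⟨h1, ht⟩⟩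
        · exact absurd h (Set.notMem_empty _)
    · rintro ⟨t, rfl, ⟨h1, h2⟩ | ⟨h1, h2⟩⟩
      · left
        rw [if_pos h1]
        exact ⟨t, h2, rfl⟩
      · right
        rw [if_pos h1]
        exact ⟨t, h2, rfl⟩
  have hK : ∀ w x, x ∈ K w → x = p w ∨ ∃ e, x ∈ X e w := by
    rintro w x (h | h)
    · exact Or.inl h
    · exact Or.inr (Set.mem_iUnion.1 h)
  have hXK : ∀ e w, X e w ⊆ K w := fun e w x hx => Or.inr (Set.mem_iUnion.2 ⟨e, hx⟩)
  have hpK : ∀ w, p w ∈ K w := fun w => Or.inl rfl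
  have Kcomp : ∀ w, IsCompact (K w) := by
    intro w
    refine isCompact_singleton.union (isCompact_iUnion fun e => IsCompact.union ?_ ?_)
    · split_ifs
      · exact isClosed_Iic.isCompact.image (ccont e)
      · exact isCompact_empty
    · split_ifs
      · exact isClosed_Ici.isCompact.image (ccont e)
      · exact isCompact_empty
  have Mcomp : ∀ e, IsCompact (M e) := fun e => isClosed_Icc.isCompact.image (ccont e)
  have Mconn : ∀ e, IsPreconnected (M e) := fun e =>
    isPreconnected_Icc.image _ (ccont e).continuousOn
  have Kconn : ∀ w, IsPreconnected (K w) := by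
    intro w
    refine isPreconnected_of_forall (p w) fun y hy => ?_
    rcases hK w y hy with h | ⟨e, he⟩
    · exact ⟨{p w}, by simpa using hpK w, rfl, h, isPreconnected_singleton⟩
    · obtain ⟨t, rfl, ⟨h1, h2⟩ | ⟨h1, h2⟩⟩ := (hX e w y).1 he
      · refine ⟨c e '' Set.Iic a, ?_, ⟨0, h0a.le, by rw [c0, ← h1]⟩, ⟨t, h2, rfl⟩,
          isPreconnected_Iic.image _ (ccont e).continuousOn⟩
        rintro _ ⟨s, hs, rfl⟩
        exact hXK e w ((hX e w _).2 ⟨s, rfl, Or.inl ⟨h1, hs⟩⟩)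
      · refine ⟨c e '' Set.Ici b, ?_, ⟨1, hb1.le, by rw [c1, ← h1]⟩, ⟨t, h2, rfl⟩,
          isPreconnected_Ici.image _ (ccont e).continuousOn⟩
        rintro _ ⟨s, hs, rfl⟩
        exact hXK e w ((hX e w _).2 ⟨s, rfl, Or.inr ⟨h1, hs⟩⟩)
  -- an end point lying in a piece is the centre
  have hcen : ∀ e w t, ((Sum.inl e.1.1 = w ∧ t ≤ a) ∨ (Sum.inr e.1.2 = w ∧ b ≤ t)) →
      (t = 0 ∨ t = 1) → c e t = p w := by
    rintro e w t (⟨h1, h2⟩ | ⟨h1, h2⟩) (rfl | rfl)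
    · rw [c0, ← h1]
    · exact absurd h2 (not_le.2 (hab.trans hb1))
    · exact absurd h2 (not_le.2 (h0a.trans hab))
    · rw [c1, ← h1]
  have KK : ∀ w w', w ≠ w' → Disjoint (K w) (K w') := by
    intro w w' hw
    rw [Set.disjoint_left]
    intro x hx hx'
    have hcase : ∀ w w', w ≠ w' → x = p w → x ∈ K w' → False := by
      intro w w' hw h hx'
      rcases hK w' x hx' with h' | ⟨e, he⟩
      · exact hw (hp (h.symm.trans h'))
      · obtain ⟨t, rfl, ht⟩ := (hX e w' x).1 he
        exact hw (hp (h.symm.trans (hcen e w' t ht (hends2 e t _ h))))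
    rcases hK w x hx with h | ⟨e, he⟩
    · exact hcase w w' hw h hx'
    · rcases hK w' x hx' with h' | ⟨e', he'⟩
      · exact hcase w' w hw.symm h' hx
      · obtain ⟨t, rfl, ht⟩ := (hX e w x).1 he
        obtain ⟨t', heq, ht'⟩ := (hX e' w' _).1 he'
        by_cases hee : e = e'
        · subst hee
          have := cinj e heq
          subst this
          rcases ht with ⟨h1, h2⟩ | ⟨h1, h2⟩ <;> rcases ht' with ⟨h3, h4⟩ | ⟨h3, h4⟩
          · exact hw (h1.symm.trans h3)
          · exact absurd (h4.trans h2) (not_le.2 hab)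
          · exact absurd (h2.trans h4) (not_le.2 hab)
          · exact hw (h1.symm.trans h3)
        · obtain ⟨q1, q2⟩ := hmeet e e' t t' hee heq.symm
          exact hw (hp ((hcen e w t ht q1).symm.trans (heq.symm.trans (hcen e' w' t' ht' q2))))
  have hmid : ∀ t, t ∈ Set.Icc a b → ¬ (t = 0 ∨ t = 1) := by
    rintro t ⟨h1, h2⟩ (rfl | rfl)
    · exact absurd h1 (not_le.2 h0a)
    · exact absurd h2 (not_le.2 hb1)
  have MM : ∀ e e', e ≠ e' → Disjoint (M e) (M e') := by
    intro e e' hne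
    rw [Set.disjoint_left]
    rintro _ ⟨t, ht, rfl⟩ ⟨t', ht', heq⟩
    exact hmid t ht (hmeet e e' t t' hne heq.symm).1
  have MK : ∀ e w, w ≠ Sum.inl e.1.1 → w ≠ Sum.inr e.1.2 → Disjoint (M e) (K w) := by
    intro e w hw1 hw2
    rw [Set.disjoint_left]
    rintro _ ⟨t, ht, rfl⟩ hx
    rcases hK w _ hx with h | ⟨e', he'⟩
    · exact hmid t ht (hends2 e t _ h)
    · obtain ⟨t', heq, ht'⟩ := (hX e' w _).1 he'
      by_cases hee : e = e'
      · subst hee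
        rcases ht' with ⟨h1, _⟩ | ⟨h1, _⟩
        · exact hw1 h1.symm
        · exact hw2 h1.symm
      · exact hmid t ht (hmeet e e' t t' hee heq.symm).1
  -- choose a fine scale
  have ev1 : ∀ᶠ L : ℝ in Filter.atTop, ∀ w w', w ≠ w' → Disjoint (hat L (K w)) (hat L (K w')) := by
    refine Filter.eventually_all.2 fun w => Filter.eventually_all.2 fun w' => ?_
    by_cases h : w = w'
    · exact Filter.Eventually.of_forall fun L h' => absurd h h'
    · filter_upwards [hat_disjoint (Kcomp w) (Kcomp w') (KK w w' h)] with L hL _ using hL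
  have ev2 : ∀ᶠ L : ℝ in Filter.atTop, ∀ e e', e ≠ e' → Disjoint (hat L (M e)) (hat L (M e')) := by
    refine Filter.eventually_all.2 fun w => Filter.eventually_all.2 fun w' => ?_
    by_cases h : w = w'
    · exact Filter.Eventually.of_forall fun L h' => absurd h h'
    · filter_upwards [hat_disjoint (Mcomp w) (Mcomp w') (MM w w' h)] with L hL _ using hL
  have ev3 : ∀ᶠ L : ℝ in Filter.atTop, ∀ (e : E) w, w ≠ Sum.inl e.1.1 → w ≠ Sum.inr e.1.2 →
      Disjoint (hat L (M e)) (hat L (K w)) := by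
    refine Filter.eventually_all.2 fun e => Filter.eventually_all.2 fun w => ?_
    by_cases h : w = Sum.inl e.1.1
    · exact Filter.Eventually.of_forall fun L h' => absurd h h'
    · by_cases h2 : w = Sum.inr e.1.2
      · exact Filter.Eventually.of_forall fun L _ h' => absurd h2 h'
      · filter_upwards [hat_disjoint (Mcomp e) (Kcomp w) (MK e w h h2)] with L hL _ _ using hL
  obtain ⟨L, e1, e2, e3⟩ := (ev1.and (ev2.and ev3)).exists
  refine minor_bound hn E (fun w => hat L (K w)) (fun e => hat L (M e))
    (fun w => hat_finite L (Kcomp w)) (fun e => hat_finite L (Mcomp e))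
    (fun w => ⟨_, hat_mem_floor (hpK w)⟩) (fun w => hat_conn L (Kcomp w) (Kconn w))
    (fun e => hat_conn L (Mcomp e) (Mconn e)) e1 e2 e3 ?_ ?_
  · intro e
    refine ⟨_, hat_mem_floor (p := c e a) ⟨a, ⟨le_rfl, hab.le⟩, rfl⟩, hat_mem_floor ?_⟩
    exact hXK e _ ((hX e _ _).2 ⟨a, rfl, Or.inl ⟨rfl, le_rfl⟩⟩)
  · intro e
    refine ⟨_, hat_mem_floor (p := c e b) ⟨b, ⟨hab.le, le_rfl⟩, rfl⟩, hat_mem_floor ?_⟩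
    exact hXK e _ ((hX e _ _).2 ⟨b, rfl, Or.inr ⟨rfl, le_rfl⟩⟩)

end Planar

/-! ### Conclusion -/

/-- embedding of the two big parts -/
def bigPart (n : ℕ) : Fin n ⊕ Fin n → TV n
  | Sum.inl i => ⟨1, i⟩
  | Sum.inr j => ⟨2, j⟩

lemma bigPart_inj (n : ℕ) : Function.Injective (bigPart n) := by
  rintro (i | i) (j | j) h
  · have h' := congrArg vidx h
    exact congrArg Sum.inl (Fin.ext h')
  · have h' := congrArg Sigma.fst h
    exact absurd h' (by simp [bigPart])
  · have h' := congrArg Sigma.fst h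
    exact absurd h' (by simp [bigPart])
  · have h' := congrArg vidx h
    exact congrArg Sum.inr (Fin.ext h')

lemma decomp_bound (n m : ℕ) (hn : 1 ≤ n) (H : Fin m → SimpleGraph (TV n))
    (hP : ∀ i, IsPlanar (H i))
    (hs : (⨆ i, H i) = completeMultipartiteGraph ![Fin 1, Fin n, Fin n]) : n + 2 ≤ 4 * m := by
  classical
  have hadj : ∀ i j : Fin n, ∃ k, (H k).Adj (bigPart n (Sum.inl i)) (bigPart n (Sum.inr j)) := by
    intro i j
    have h : (⨆ i, H i).Adj (bigPart n (Sum.inl i)) (bigPart n (Sum.inr j)) := by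
      rw [hs]
      simp [bigPart]
    rwa [SimpleGraph.iSup_adj] at h
  rcases Nat.lt_or_ge n 2 with h2 | h2
  · obtain ⟨k, _⟩ := hadj ⟨0, hn⟩ ⟨0, hn⟩
    have := k.2
    omega
  · let E : Fin m → Finset (Fin n × Fin n) := fun k => Finset.univ.filter fun e =>
      (H k).Adj (bigPart n (Sum.inl e.1)) (bigPart n (Sum.inr e.2))
    have hE : ∀ k, (E k).card ≤ 4 * n - 4 := by
      intro k
      have := planar_bound (H k) (hP k) h2 (bigPart n) (bigPart_inj n) (E k)
        (fun e he => (Finset.mem_filter.1 he).2)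
      omega
    have hU : (Finset.univ : Finset (Fin n × Fin n)) ⊆ Finset.univ.biUnion E := by
      rintro ⟨i, j⟩ _
      obtain ⟨k, hk⟩ := hadj i j
      exact Finset.mem_biUnion.2 ⟨k, Finset.mem_univ _, Finset.mem_filter.2 ⟨Finset.mem_univ _, hk⟩⟩
    have h3 := (Finset.card_le_card hU).trans (Finset.card_biUnion_le_card_mul _ _ _ fun k _ => hE k)
    simp only [Finset.card_univ, Fintype.card_prod, Fintype.card_fin] at h3
    obtain ⟨d, rfl⟩ : ∃ d, n = d + 2 := ⟨n - 2, by omega⟩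
    have h4 : 4 * (d + 2) - 4 = 4 * (d + 1) := by omega
    rw [h4] at h3
    by_contra hcon
    have h5 : 4 * m ≤ d + 3 := by omega
    have h6 : m * (4 * (d + 1)) ≤ (d + 3) * (d + 1) := by nlinarith
    nlinarith

theorem thickness_K1nn (n : ℕ) (hn : 1 ≤ n) :
    (thickness (completeMultipartiteGraph ![Fin 1, Fin n, Fin n]) : ℤ) = ⌈((n : ℚ) + 2) / 4⌉ := by
  have hk : n ≤ 4 * ((n + 1) / 4) + 2 := by omega
  have hmem := exists_decomp n ((n + 1) / 4) hk
  have hT : thickness (completeMultipartiteGraph ![Fin 1, Fin n, Fin n]) = (n + 1) / 4 + 1 := by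
    unfold thickness
    apply le_antisymm
    · exact Nat.sInf_le hmem
    · refine le_csInf ⟨_, hmem⟩ ?_
      rintro m ⟨H, _, hP, hs⟩
      have := decomp_bound n _ hn H hP hs
      omega
  rw [hT]
  symm
  rw [Int.ceil_eq_iff]
  have h1 : 4 * ((n + 1) / 4) < n + 2 := by omega
  have h1' : (4 : ℚ) * (((n + 1) / 4 : ℕ) : ℚ) < n + 2 := by exact_mod_cast h1
  have hk' : (n : ℚ) ≤ 4 * (((n + 1) / 4 : ℕ) : ℚ) + 2 := by exact_mod_cast hk
  rw [Int.cast_natCast]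
  push_cast [Nat.cast_add] at *
  constructor <;> linarith
end

section
/- For every p ≥ 0 there exists a decomposition of the complete tripartite graph K_{2,4p+1,4p+1} into p+1 planar subgraphs; in particular θ(K_{2,4p+1,4p+1}) ≤ p+1. -/
open SimpleGraph

section Book

/-- Arc over the interval `[a,b]`. -/
noncomputable def bookArc (σ a b : ℝ) (t : ℝ) : ℝ × ℝ :=
  (a + t * (b - a), σ * Real.sqrt ((t * (b - a)) * ((1 - t) * (b - a))))

def bookSign (b : Bool) : ℝ := if b then 1 else -1

theorem bookSign_ne (b : Bool) : bookSign b ≠ 0 := by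
  cases b <;> simp [bookSign]

theorem bookSign_eq {b b' : Bool} {y y' : ℝ} (hy : 0 < y) (hy' : 0 < y')
    (h : bookSign b * y = bookSign b' * y') : b = b' ∧ y = y' := by
  cases b <;> cases b' <;> simp [bookSign] at h ⊢ <;> linarith

theorem isPlanar_of_book {V : Type*} (G : SimpleGraph V) (f : V → ℝ)
    (hf : Function.Injective f) (P : Bool → V → V → Prop)
    (hlt : ∀ b u v, P b u v → f u < f v)
    (hadj : ∀ u v, G.Adj u v → ∃ b, P b u v ∨ P b v u)
    (hnc : ∀ b u v w z, P b u v → P b w z → f u < f w → f w < f v → f v < f z → False) :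
    IsPlanar G := by
  have key : ∀ e : G.edgeSet, ∃ b u v, (e : Sym2 V) = s(u, v) ∧ P b u v := by
    rintro ⟨e, he⟩
    induction e using Sym2.ind with
    | _ u v =>
      obtain ⟨b, h | h⟩ := hadj u v he
      · exact ⟨b, u, v, rfl, h⟩
      · exact ⟨b, v, u, Sym2.eq_swap, h⟩
  choose b u v he hP using key
  have hpos : ∀ e, 0 < f (v e) - f (u e) := fun e => sub_pos.2 (hlt _ _ _ (hP e))
  have hyp : ∀ e (t : ℝ), 0 < t → t < 1 →
      0 < Real.sqrt ((t * (f (v e) - f (u e))) * ((1 - t) * (f (v e) - f (u e)))) := by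
    intro e t h0 h1
    have := hpos e
    have h2 : 0 < 1 - t := by linarith
    exact Real.sqrt_pos.2 (by positivity)
  refine ⟨fun x => (f x, 0),
    fun e t => bookArc (bookSign (b e)) (f (u e)) (f (v e)) t, ?_, ?_, ?_, ?_, ?_, ?_⟩
  · intro x y h
    exact hf (congrArg Prod.fst h)
  · intro e
    unfold bookArc
    fun_prop
  · intro e
    refine ⟨u e, v e, he e, ?_, ?_⟩ <;> simp [bookArc]
  · intro e s t h
    have h1 := congrArg Prod.fst h
    simp only [bookArc] at h1
    have := hpos e
    apply Subtype.ext
    have h2 : (s : ℝ) * (f (v e) - f (u e)) = t * (f (v e) - f (u e)) := by linarith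
    exact mul_right_cancel₀ this.ne' h2
  · intro e t h0 h1 x h
    have h2 := congrArg Prod.snd h
    simp only [bookArc] at h2
    have ht := t.2
    have := hyp e t (lt_of_le_of_ne ht.1 (Ne.symm h0)) (lt_of_le_of_ne ht.2 h1)
    exact (mul_ne_zero (bookSign_ne _) this.ne') h2
  · intro e e' hne s t h
    by_cases hs0 : (s : ℝ) = 0
    · exact ⟨u e, by simp [bookArc, hs0]⟩
    by_cases hs1 : (s : ℝ) = 1
    · exact ⟨v e, by simp [bookArc, hs1]⟩
    have hs0' := lt_of_le_of_ne s.2.1 (Ne.symm hs0)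
    have hs1' := lt_of_le_of_ne s.2.2 hs1
    by_cases ht0 : (t : ℝ) = 0
    · exact ⟨u e', by simp only [h]; simp [bookArc, ht0]⟩
    by_cases ht1 : (t : ℝ) = 1
    · exact ⟨v e', by simp only [h]; simp [bookArc, ht1]⟩
    have ht0' := lt_of_le_of_ne t.2.1 (Ne.symm ht0)
    have ht1' := lt_of_le_of_ne t.2.2 ht1
    exfalso
    have hx := congrArg Prod.fst h
    have hy := congrArg Prod.snd h
    simp only [bookArc] at hx hy
    obtain ⟨hb, hy⟩ := bookSign_eq (hyp e s hs0' hs1') (hyp e' t ht0' ht1') hy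
    have p1 := hpos e
    have p2 := hpos e'
    have q1 : 0 < (s : ℝ) * (f (v e) - f (u e)) := by positivity
    have q2 : 0 < (1 - (s : ℝ)) * (f (v e) - f (u e)) := mul_pos (by linarith) p1
    have q3 : 0 < (t : ℝ) * (f (v e') - f (u e')) := by positivity
    have q4 : 0 < (1 - (t : ℝ)) * (f (v e') - f (u e')) := mul_pos (by linarith) p2
    have hy2 := (Real.sqrt_inj (mul_pos q1 q2).le (mul_pos q3 q4).le).1 hy
    have r2 : (1 - (s : ℝ)) * (f (v e) - f (u e)) = f (v e) - f (u e) - s * (f (v e) - f (u e)) := by ring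
    have r4 : (1 - (t : ℝ)) * (f (v e') - f (u e')) = f (v e') - f (u e') - t * (f (v e') - f (u e')) := by ring
    generalize (s : ℝ) * (f (v e) - f (u e)) = A at *
    generalize (1 - (s : ℝ)) * (f (v e) - f (u e)) = B at *
    generalize (t : ℝ) * (f (v e') - f (u e')) = C at *
    generalize (1 - (t : ℝ)) * (f (v e') - f (u e')) = D at *
    have hPe := hP e
    have hPe' := hP e'
    rw [← hb] at hPe'
    rcases lt_trichotomy (f (u e)) (f (u e')) with hc | hc | hc
    · have hd : f (v e') ≤ f (v e) := by
        by_contra hd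
        exact hnc _ _ _ _ _ hPe hPe' hc (by linarith) (lt_of_not_ge hd)
      have : C * D < A * B := mul_lt_mul (by linarith) (by linarith) q4 q1.le
      linarith
    · have hAC : A = C := by linarith
      subst hAC
      have hBD : B = D := mul_left_cancel₀ q1.ne' hy2
      have h1 := hf hc
      have h2 := hf (show f (v e) = f (v e') by linarith)
      exact hne (Subtype.ext (by rw [he e, he e', h1, h2]))
    · have hd : f (v e) ≤ f (v e') := by
        by_contra hd
        exact hnc _ _ _ _ _ hPe' hPe hc (by linarith) (lt_of_not_ge hd)
      have : A * B < C * D := mul_lt_mul (by linarith) (by linarith) q2 q3.le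
      linarith

end Book

/-- Vertex names. -/
inductive TW : Type
  | x1 | x2 | u0 | v0
  | u1 (j : ℕ) | u2 (j : ℕ) | u3 (j : ℕ) | u4 (j : ℕ)
  | v1 (j : ℕ) | v2 (j : ℕ) | v3 (j : ℕ) | v4 (j : ℕ)

namespace TW

def part : TW → ℕ
  | x1 | x2 => 0
  | u0 | u1 _ | u2 _ | u3 _ | u4 _ => 1
  | v0 | v1 _ | v2 _ | v3 _ | v4 _ => 2

def idx (p : ℕ) : TW → ℕ
  | x1 => 0
  | x2 => 1
  | u0 | v0 => 4 * p
  | u1 j | v1 j => 4 * j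
  | u2 j | v2 j => 4 * j + 1
  | u3 j | v3 j => 4 * j + 2
  | u4 j | v4 j => 4 * j + 3

def Valid (p : ℕ) : TW → Prop
  | x1 | x2 | u0 | v0 => True
  | u1 j | u2 j | u3 j | u4 j | v1 j | v2 j | v3 j | v4 j => j < p

/-- positions in layer `r` -/
def pos (p r s : ℕ) : TW → ℕ
  | x1 => 5 * (4 * p + 4)
  | x2 => 15 * (4 * p + 4)
  | u0 => 1 * (4 * p + 4)
  | v0 => 11 * (4 * p + 4)
  | u1 j => if j = r then 10 * (4 * p + 4) else 9 * (4 * p + 4) + 4 * j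
  | u2 j => if j = r then 13 * (4 * p + 4) else 9 * (4 * p + 4) + 4 * j + 1
  | u3 j => if j = r then 0 else 2 * (4 * p + 4) + 4 * j
  | u4 j => if j = r then 3 * (4 * p + 4) else 2 * (4 * p + 4) + 4 * j + 1
  | v1 j => if j = r then 16 * (4 * p + 4) else 12 * (4 * p + 4) + 4 * j
  | v2 j => if j = r then 4 * (4 * p + 4) else 12 * (4 * p + 4) + 4 * j + 1
  | v3 j => if j = r then 14 * (4 * p + 4) else 7 * (4 * p + 4) + 4 * j
  | v4 j => if j = r then 8 * (4 * p + 4) else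
      if j = s then 6 * (4 * p + 4) else 7 * (4 * p + 4) + 4 * j + 1

/-- positions in the last layer -/
def posL (p : ℕ) : TW → ℕ
  | x1 => 0
  | x2 => 7 * (4 * p + 4)
  | u0 => 5 * (4 * p + 4)
  | v0 => 2 * (4 * p + 4)
  | u1 j => 1 * (4 * p + 4) + 4 * j
  | v1 j => 1 * (4 * p + 4) + 4 * j + 1
  | v2 j => 1 * (4 * p + 4) + 4 * j + 2
  | u2 j => 1 * (4 * p + 4) + 4 * j + 3
  | u3 j => 3 * (4 * p + 4) + 4 * j
  | u4 j => 3 * (4 * p + 4) + 4 * j + 1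
  | v4 j => 4 * (4 * p + 4) + 4 * j
  | v3 j => 6 * (4 * p + 4) + 4 * j

/-- oriented edges of layer `r` with their pages -/
inductive L (p r s : ℕ) : Bool → TW → TW → Prop
  | a1 (j : ℕ) (h : j < p) : L p r s true (u3 j) (v1 r)
  | a2 (j : ℕ) (h : j < p) : L p r s true (u4 j) (v1 r)
  | a3 : L p r s true u0 (v1 r)
  | a4 (j : ℕ) (h : j < p) : L p r s true (u4 r) (v3 j)
  | a5 (j : ℕ) (h : j < p) : L p r s true (u4 r) (v4 j)
  | a6 (j : ℕ) (h : j < p) : L p r s true (v4 r) (u1 j)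
  | a7 (j : ℕ) (h : j < p) : L p r s true (v4 r) (u2 j)
  | a8 : L p r s true v0 (u2 r)
  | a9 (j : ℕ) (h : j < p) (hj : j ≠ r) : L p r s true (v1 j) (u2 r)
  | a10 (j : ℕ) (h : j < p) (hj : j ≠ r) : L p r s true (v2 j) (u2 r)
  | a11 : L p r s true (u4 r) x1
  | a12 : L p r s true (u4 r) x2
  | a13 : L p r s true x2 (v1 r)
  | b1 (j : ℕ) (h : j < p) : L p r s false (u3 j) (v2 r)
  | b2 (j : ℕ) (h : j < p) : L p r s false (u4 j) (v2 r)
  | b3 : L p r s false u0 (v2 r)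
  | b4 (j : ℕ) (h : j < p) : L p r s false (u3 r) (v3 j)
  | b5 (j : ℕ) (h : j < p) : L p r s false (u3 r) (v4 j)
  | b6 (j : ℕ) (h : j < p) : L p r s false (u1 j) (v3 r)
  | b7 (j : ℕ) (h : j < p) : L p r s false (u2 j) (v3 r)
  | b8 : L p r s false (u1 r) v0
  | b9 (j : ℕ) (h : j < p) (hj : j ≠ r) : L p r s false (u1 r) (v1 j)
  | b10 (j : ℕ) (h : j < p) (hj : j ≠ r) : L p r s false (u1 r) (v2 j)
  | b11 : L p r s false (v2 r) x1
  | b12 : L p r s false (u3 r) x1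
  | b13 : L p r s false x1 (v4 s)
  | b14 : L p r s false (v3 r) x2
  | b15 : L p r s false (u3 r) x2

/-- oriented edges of the last layer with their pages -/
inductive M (p : ℕ) : Bool → TW → TW → Prop
  | a1 (j : ℕ) (h : j < p) : M p true x1 (u1 j)
  | a2 (j : ℕ) (h : j < p) : M p true x1 (v1 j)
  | a3 (j : ℕ) (h : j < p) : M p true x1 (u2 j)
  | a4 : M p true x1 v0
  | a5 : M p true x1 u0
  | a6 (j : ℕ) (h : j < p) : M p true x1 (v3 j)
  | a7 (j : ℕ) (h : j < p) : M p true (v1 j) (u2 j)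
  | a8 (j : ℕ) (h : j < p) : M p true (u1 j) (v1 j)
  | a9 (j : ℕ) (h : j < p) : M p true v0 (u3 j)
  | a10 (j : ℕ) (h : j < p) : M p true v0 (u4 j)
  | a11 : M p true v0 u0
  | a12 (j : ℕ) (h : j < p) : M p true (v4 j) u0
  | b1 (j : ℕ) (h : j < p) : M p false (u1 j) (v2 j)
  | b2 (j : ℕ) (h : j < p) : M p false (v2 j) (u2 j)
  | b3 (j : ℕ) (h : j < p) : M p false (u1 j) x2
  | b4 (j : ℕ) (h : j < p) : M p false (v2 j) x2
  | b5 (j : ℕ) (h : j < p) : M p false (u2 j) x2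
  | b6 : M p false v0 x2
  | b7 (j : ℕ) (h : j < p) : M p false (v4 j) x2
  | b8 : M p false u0 x2
  | b9 (j : ℕ) (h : j < p) : M p false u0 (v3 j)

theorem L_part {p r s b x y} (h : L p r s b x y) : part x ≠ part y := by
  cases h <;> simp [part]

theorem M_part {p b x y} (h : M p b x y) : part x ≠ part y := by
  cases h <;> simp [part]

theorem L_lt {p r s b x y} (hr : r < p) (hs : s < p) (h : L p r s b x y) :
    pos p r s x < pos p r s y := by
  cases h <;> simp only [pos] <;> split_ifs <;> omega

theorem M_lt {p b x y} (h : M p b x y) : posL p x < posL p y := by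
  cases h <;> simp only [posL] <;> omega

set_option maxHeartbeats 4000000 in
theorem L_nc {p r s b x y z w} (hr : r < p) (hs : s < p) (hrs : s = r → p = 1)
    (h : L p r s b x y) (h' : L p r s b z w)
    (h1 : pos p r s x < pos p r s z) (h2 : pos p r s z < pos p r s y)
    (h3 : pos p r s y < pos p r s w) : False := by
  cases h <;> cases h' <;> simp only [pos, if_true] at h1 h2 h3 <;>
    first
    | omega
    | (split_ifs at h1 h2 h3 <;> omega)

set_option maxHeartbeats 4000000 in
theorem M_nc {p b x y z w} (h : M p b x y) (h' : M p b z w)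
    (h1 : posL p x < posL p z) (h2 : posL p z < posL p y)
    (h3 : posL p y < posL p w) : False := by
  cases h <;> cases h' <;> simp only [posL] at h1 h2 h3 <;> omega

set_option maxHeartbeats 4000000 in
theorem pos_inj {p r s x y} (hx : Valid p x) (hy : Valid p y) (hr : r < p) (hs : s < p)
    (h : pos p r s x = pos p r s y) : x = y := by
  cases x <;> cases y <;> simp only [pos, Valid] at h hx hy <;>
    simp only [TW.u1.injEq, TW.u2.injEq, TW.u3.injEq, TW.u4.injEq, TW.v1.injEq, TW.v2.injEq,
      TW.v3.injEq, TW.v4.injEq, reduceCtorEq] <;>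
    first
    | omega
    | (split_ifs at h <;> omega)

set_option maxHeartbeats 4000000 in
theorem posL_inj {p x y} (hx : Valid p x) (hy : Valid p y)
    (h : posL p x = posL p y) : x = y := by
  cases x <;> cases y <;> simp only [posL, Valid] at h hx hy <;>
    simp only [TW.u1.injEq, TW.u2.injEq, TW.u3.injEq, TW.u4.injEq, TW.v1.injEq, TW.v2.injEq,
      TW.v3.injEq, TW.v4.injEq, reduceCtorEq] <;> omega

def nxt (p r : ℕ) : ℕ := if r + 1 < p then r + 1 else 0

/-- layer `i`, oriented edges -/
def D (p i : ℕ) (b : Bool) (x y : TW) : Prop :=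
  (i < p ∧ L p i (nxt p i) b x y) ∨ (i = p ∧ M p b x y)

def E (p i : ℕ) (x y : TW) : Prop := ∃ b, D p i b x y ∨ D p i b y x

theorem E_part {p i x y} (h : E p i x y) : part x ≠ part y := by
  obtain ⟨b, (⟨_, h⟩ | ⟨_, h⟩) | (⟨_, h⟩ | ⟨_, h⟩)⟩ := h
  · exact L_part h
  · exact M_part h
  · exact (L_part h).symm
  · exact (M_part h).symm

theorem E_symm {p i x y} (h : E p i x y) : E p i y x := by
  obtain ⟨b, h⟩ := h
  exact ⟨b, h.symm⟩

theorem eL {p i b x y} (hi : i < p) (h : L p i (nxt p i) b x y) :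
    ∃ i ≤ p, E p i x y := ⟨i, hi.le, b, Or.inl (Or.inl ⟨hi, h⟩)⟩
theorem eL' {p i b x y} (hi : i < p) (h : L p i (nxt p i) b y x) :
    ∃ i ≤ p, E p i x y := ⟨i, hi.le, b, Or.inr (Or.inl ⟨hi, h⟩)⟩
theorem eM {p b x y} (h : M p b x y) :
    ∃ i ≤ p, E p i x y := ⟨p, le_rfl, b, Or.inl (Or.inr ⟨rfl, h⟩)⟩
theorem eM' {p b x y} (h : M p b y x) :
    ∃ i ≤ p, E p i x y := ⟨p, le_rfl, b, Or.inr (Or.inr ⟨rfl, h⟩)⟩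

theorem nxt_surj {p k : ℕ} (hk : k < p) : ∃ r < p, nxt p r = k := by
  rcases Nat.eq_zero_or_pos k with h | h
  · exact ⟨p - 1, by omega, by unfold nxt; split_ifs <;> omega⟩
  · exact ⟨k - 1, by omega, by unfold nxt; split_ifs <;> omega⟩

theorem complete_lt {p x y} (hx : Valid p x) (hy : Valid p y) (h : part x < part y) :
    ∃ i ≤ p, E p i x y := by
  cases x <;> cases y <;> simp only [part, Valid] at h hx hy <;> try omega
  case x1.v4 k =>
    obtain ⟨r, hr, rfl⟩ := nxt_surj hy
    exact eL hr .b13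
  case u1.v1 j k =>
    by_cases hjk : k = j
    · subst hjk; exact eM (.a8 _ hx)
    · exact eL hx (.b9 _ hy hjk)
  case u1.v2 j k =>
    by_cases hjk : k = j
    · subst hjk; exact eM (.b1 _ hx)
    · exact eL hx (.b10 _ hy hjk)
  case u2.v1 j k =>
    by_cases hjk : k = j
    · subst hjk; exact eM' (.a7 _ hx)
    · exact eL' hx (.a9 _ hy hjk)
  case u2.v2 j k =>
    by_cases hjk : k = j
    · subst hjk; exact eM' (.b2 _ hx)
    · exact eL' hx (.a10 _ hy hjk)
  all_goals first
    | exact eM (by constructor <;> assumption)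
    | exact eM' (by constructor <;> assumption)
    | exact eL hx (by constructor <;> assumption)
    | exact eL hy (by constructor <;> assumption)
    | exact eL' hx (by constructor <;> assumption)
    | exact eL' hy (by constructor <;> assumption)

theorem complete {p x y} (hx : Valid p x) (hy : Valid p y) (h : part x ≠ part y) :
    ∃ i ≤ p, E p i x y := by
  rcases lt_or_gt_of_ne h with h | h
  · exact complete_lt hx hy h
  · obtain ⟨i, hi, h⟩ := complete_lt hy hx h
    exact ⟨i, hi, E_symm h⟩

def encX (m : ℕ) : TW := if m = 0 then x1 else x2
def encU (p m : ℕ) : TW :=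
  if m = 4 * p then u0 else if m % 4 = 0 then u1 (m / 4) else if m % 4 = 1 then u2 (m / 4)
  else if m % 4 = 2 then u3 (m / 4) else u4 (m / 4)
def encV (p m : ℕ) : TW :=
  if m = 4 * p then v0 else if m % 4 = 0 then v1 (m / 4) else if m % 4 = 1 then v2 (m / 4)
  else if m % 4 = 2 then v3 (m / 4) else v4 (m / 4)

theorem encX_spec {p m : ℕ} (h : m < 2) :
    Valid p (encX m) ∧ part (encX m) = 0 ∧ idx p (encX m) = m := by
  unfold encX; split_ifs <;> simp only [Valid, part, idx, true_and] <;> omega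
theorem encU_spec {p m : ℕ} (h : m < 4 * p + 1) :
    Valid p (encU p m) ∧ part (encU p m) = 1 ∧ idx p (encU p m) = m := by
  unfold encU; split_ifs <;> simp only [Valid, part, idx, true_and] <;> omega
theorem encV_spec {p m : ℕ} (h : m < 4 * p + 1) :
    Valid p (encV p m) ∧ part (encV p m) = 2 ∧ idx p (encV p m) = m := by
  unfold encV; split_ifs <;> simp only [Valid, part, idx, true_and] <;> omega

theorem exists_enc (p : ℕ) :
    ∃ e : (Σ i, ![Fin 2, Fin (4 * p + 1), Fin (4 * p + 1)] i) → TW,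
      Function.Injective e ∧ (∀ v, Valid p (e v)) ∧ (∀ v, part (e v) = (v.1 : ℕ)) := by
  let e : (Σ i, ![Fin 2, Fin (4 * p + 1), Fin (4 * p + 1)] i) → TW := fun v =>
    match v with
    | ⟨0, a⟩ => encX (show Fin 2 from a).val
    | ⟨1, a⟩ => encU p (show Fin (4 * p + 1) from a).val
    | ⟨2, a⟩ => encV p (show Fin (4 * p + 1) from a).val
  have h1 : ∀ v, Valid p (e v) := by
    rintro ⟨i, a⟩
    fin_cases i
    · exact (encX_spec (show Fin 2 from a).isLt).1
    · exact (encU_spec (show Fin (4 * p + 1) from a).isLt).1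
    · exact (encV_spec (show Fin (4 * p + 1) from a).isLt).1
  have h2 : ∀ v, part (e v) = (v.1 : ℕ) := by
    rintro ⟨i, a⟩
    fin_cases i
    · exact (encX_spec (p := p) (show Fin 2 from a).isLt).2.1
    · exact (encU_spec (show Fin (4 * p + 1) from a).isLt).2.1
    · exact (encV_spec (show Fin (4 * p + 1) from a).isLt).2.1
  refine ⟨e, ?_, h1, h2⟩
  rintro ⟨i, a⟩ ⟨i', a'⟩ h
  have h3 : i = i' := by
    have := congrArg part h
    rw [h2, h2] at this
    exact Fin.ext this
  subst h3
  have h4 := congrArg (idx p) h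
  fin_cases i
  · have q := (encX_spec (p := p) (show Fin 2 from a).isLt).2.2
    have q' := (encX_spec (p := p) (show Fin 2 from a').isLt).2.2
    exact congrArg (Sigma.mk _) (Fin.ext (q.symm.trans (h4.trans q')))
  · have q := (encU_spec (show Fin (4 * p + 1) from a).isLt).2.2
    have q' := (encU_spec (show Fin (4 * p + 1) from a').isLt).2.2
    exact congrArg (Sigma.mk _) (Fin.ext (q.symm.trans (h4.trans q')))
  · have q := (encV_spec (show Fin (4 * p + 1) from a).isLt).2.2
    have q' := (encV_spec (show Fin (4 * p + 1) from a').isLt).2.2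
    exact congrArg (Sigma.mk _) (Fin.ext (q.symm.trans (h4.trans q')))

theorem nxt_lt {p r : ℕ} (h : r < p) : nxt p r < p := by unfold nxt; split_ifs <;> omega
theorem nxt_eq {p r : ℕ} (h : r < p) (h' : nxt p r = r) : p = 1 := by
  unfold nxt at h'; split_ifs at h' <;> omega

def layer {V : Type*} (e : V → TW) (p i : ℕ) : SimpleGraph V where
  Adj x y := E p i (e x) (e y)
  symm := ⟨fun _ _ h => E_symm h⟩
  loopless := ⟨fun _ h => E_part h rfl⟩

theorem layer_planar {V : Type*} (e : V → TW) (he : Function.Injective e) (p i : ℕ) (hi : i ≤ p)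
    (hv : ∀ v, Valid p (e v)) : IsPlanar (layer e p i) := by
  rcases hi.lt_or_eq with hi | rfl
  · refine isPlanar_of_book _ (fun v => (pos p i (nxt p i) (e v) : ℝ)) ?_
      (fun b x y => L p i (nxt p i) b (e x) (e y)) ?_ ?_ ?_
    · intro x y h
      exact he (pos_inj (hv _) (hv _) hi (nxt_lt hi) (Nat.cast_injective h))
    · intro b u v h
      exact_mod_cast L_lt hi (nxt_lt hi) h
    · rintro u v ⟨b, (⟨_, h⟩ | ⟨h, _⟩) | (⟨_, h⟩ | ⟨h, _⟩)⟩
      · exact ⟨b, Or.inl h⟩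
      · omega
      · exact ⟨b, Or.inr h⟩
      · omega
    · intro b u v w z h h' h1 h2 h3
      exact L_nc hi (nxt_lt hi) (nxt_eq hi) h h' (by exact_mod_cast h1) (by exact_mod_cast h2)
        (by exact_mod_cast h3)
  · refine isPlanar_of_book _ (fun v => (posL i (e v) : ℝ)) ?_
      (fun b x y => M i b (e x) (e y)) ?_ ?_ ?_
    · intro x y h
      exact he (posL_inj (hv _) (hv _) (Nat.cast_injective h))
    · intro b u v h
      exact_mod_cast M_lt h
    · rintro u v ⟨b, (⟨h, _⟩ | ⟨_, h⟩) | (⟨h, _⟩ | ⟨_, h⟩)⟩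
      · omega
      · exact ⟨b, Or.inl h⟩
      · omega
      · exact ⟨b, Or.inr h⟩
    · intro b u v w z h h' h1 h2 h3
      exact M_nc h h' (by exact_mod_cast h1) (by exact_mod_cast h2) (by exact_mod_cast h3)

end TW

theorem planar_decomposition_K2_4p1 (p : ℕ) :
    (∃ H : Fin (p + 1) → SimpleGraph (Σ i, ![Fin 2, Fin (4 * p + 1), Fin (4 * p + 1)] i),
      (∀ i, H i ≤ completeMultipartiteGraph ![Fin 2, Fin (4 * p + 1), Fin (4 * p + 1)]) ∧
      (∀ i, IsPlanar (H i)) ∧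
      (⨆ i, H i) = completeMultipartiteGraph ![Fin 2, Fin (4 * p + 1), Fin (4 * p + 1)]) ∧
    thickness (completeMultipartiteGraph ![Fin 2, Fin (4 * p + 1), Fin (4 * p + 1)]) ≤ p + 1 := by
  have main : ∃ H : Fin (p + 1) → SimpleGraph (Σ i, ![Fin 2, Fin (4 * p + 1), Fin (4 * p + 1)] i),
      (∀ i, H i ≤ completeMultipartiteGraph ![Fin 2, Fin (4 * p + 1), Fin (4 * p + 1)]) ∧
      (∀ i, IsPlanar (H i)) ∧
      (⨆ i, H i) = completeMultipartiteGraph ![Fin 2, Fin (4 * p + 1), Fin (4 * p + 1)] := by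
    obtain ⟨e, he, hv, hpart⟩ := TW.exists_enc p
    have hle : ∀ i : Fin (p + 1), TW.layer e p i ≤
        completeMultipartiteGraph ![Fin 2, Fin (4 * p + 1), Fin (4 * p + 1)] := by
      intro i x y h
      have h1 := TW.E_part h
      rw [hpart, hpart] at h1
      exact fun h2 => h1 (congrArg Fin.val h2)
    refine ⟨fun i => TW.layer e p i, hle,
      fun i => TW.layer_planar e he p i (Nat.lt_succ_iff.1 i.2) hv, ?_⟩
    apply le_antisymm (iSup_le hle)
    intro x y h
    have h1 : TW.part (e x) ≠ TW.part (e y) := by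
      rw [hpart, hpart]
      exact fun h2 => h (Fin.ext h2)
    obtain ⟨i, hi, hE⟩ := TW.complete (hv x) (hv y) h1
    rw [SimpleGraph.iSup_adj]
    exact ⟨⟨i, Nat.lt_succ_of_le hi⟩, hE⟩
  exact ⟨main, Nat.sInf_le main⟩
end
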